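/- arXiv:1906.11997 — 2 statements merged into one kernel-verified Lean document; each statement's English description precedes it below -/
import Mathlib

section
/- If ζ is a primitive root of unity of order 4k, then as q approaches ζ radially from within the unit disk, lim_{q→ζ} ( φ(q) − (q²,−q,−q;q²)_∞/((−q²,q;q²)_∞) ) = −2 Σ_{n=0}^{k−1} (1+ζ²)(1+ζ⁴)···(1+ζ^{2n}) ζ^{n+1}. -/
open scoped BigOperators
open Filter

/-- finite q-Pochhammer symbol (a;q)_n -/
noncomputable def qP (a q : ℂ) (n : ℕ) : ℂ := ∏ i ∈ Finset.range n, (1 - a * q ^ i)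

/-- q-Pochhammer symbol extended to integer index: (a;q)_{-n} = 1/(a q^{-n};q)_n -/
noncomputable def qPZ (a q : ℂ) : ℤ → ℂ
  | Int.ofNat n => qP a q n
  | Int.negSucc n => 1 / qP (a * q ^ (-(n + 1 : ℤ))) q (n + 1)

/-- infinite q-Pochhammer symbol (a;q)_∞ -/
noncomputable def qPInf (a q : ℂ) : ℂ := ∏' n : ℕ, (1 - a * q ^ n)

/-- Ramanujan's third order mock theta function φ -/
noncomputable def phi3 (q : ℂ) : ℂ := ∑' n : ℕ, q ^ (n ^ 2) / qP (-q ^ 2) (q ^ 2) n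

open Topology

theorem summable_norm_of_succ_eq_mul {f g : ℕ → ℂ} {l : ℂ} (hl : ‖l‖ < 1)
    (hg : Tendsto g atTop (𝓝 l)) (h : ∀ n, f (n + 1) = g n * f n) :
    Summable fun n => ‖f n‖ := by
  obtain ⟨r, hlr, hr⟩ := exists_between hl
  refine summable_of_ratio_norm_eventually_le hr ?_
  filter_upwards [hg.norm.eventually (eventually_le_nhds hlr)] with n hn
  rw [norm_norm, norm_norm, h, norm_mul]
  gcongr

theorem tendsto_tsum_mul_pow_mul_pow {p x : ℂ} {c : ℕ → ℂ} (hp : ‖p‖ < 1)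
    (hc : Summable fun m => ‖c m * x ^ m‖) :
    Tendsto (fun n : ℕ => ∑' m, c m * (x * p ^ n) ^ m) atTop (𝓝 (c 0)) := by
  have key : ∑' m, c m * (0 : ℂ) ^ m = c 0 := by
    rw [tsum_eq_single 0 (fun m hm => by simp [hm])]
    simp
  rw [← key]
  refine tendsto_tsum_of_dominated_convergence hc (fun m => ?_) (Eventually.of_forall fun n m => ?_)
  · have : Tendsto (fun n : ℕ => x * p ^ n) atTop (𝓝 0) := by
      simpa using (tendsto_pow_atTop_nhds_zero_of_norm_lt_one hp).const_mul x
    exact (this.pow m).const_mul (c m)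
  · rw [mul_pow, ← mul_assoc, norm_mul]
    refine mul_le_of_le_one_right (norm_nonneg _) ?_
    rw [norm_pow, norm_pow]
    exact pow_le_one₀ (by positivity) (pow_le_one₀ (norm_nonneg _) hp.le)

theorem qP_succ (a q : ℂ) (n : ℕ) : qP a q (n + 1) = qP a q n * (1 - a * q ^ n) :=
  Finset.prod_range_succ _ _

theorem qP_zero (a q : ℂ) : qP a q 0 = 1 := by simp [qP]

theorem one_sub_ne_zero_of_norm_lt_one {z : ℂ} (hz : ‖z‖ < 1) : 1 - z ≠ 0 := by
  rintro h
  rw [← sub_eq_zero.mp h] at hz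
  simp at hz

theorem one_sub_mul_pow_ne_zero {a p : ℂ} (hp : ‖p‖ < 1) (ha : ‖a‖ < 1) (n : ℕ) :
    1 - a * p ^ n ≠ 0 := by
  apply one_sub_ne_zero_of_norm_lt_one
  rw [norm_mul, norm_pow]
  exact (mul_le_of_le_one_right (norm_nonneg _) (pow_le_one₀ (norm_nonneg _) hp.le)).trans_lt ha

theorem qP_ne_zero {a p : ℂ} (hp : ‖p‖ < 1) (ha : ‖a‖ < 1) (n : ℕ) : qP a p n ≠ 0 :=
  Finset.prod_ne_zero_iff.mpr fun i _ => one_sub_mul_pow_ne_zero hp ha i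

theorem summable_norm_neg_mul_pow (a : ℂ) {p : ℂ} (hp : ‖p‖ < 1) :
    Summable fun n : ℕ => ‖-(a * p ^ n)‖ := by
  simp only [norm_neg, norm_mul, norm_pow]
  exact (summable_geometric_of_lt_one (norm_nonneg _) hp).mul_left _

theorem multipliable_qPInf (a : ℂ) {p : ℂ} (hp : ‖p‖ < 1) :
    Multipliable fun n : ℕ => 1 - a * p ^ n := by
  simpa only [sub_eq_add_neg] using
    multipliable_one_add_of_summable (summable_norm_neg_mul_pow a hp)

theorem qPInf_ne_zero {a p : ℂ} (hp : ‖p‖ < 1) (h : ∀ n : ℕ, 1 - a * p ^ n ≠ 0) :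
    qPInf a p ≠ 0 := by
  simp only [qPInf, sub_eq_add_neg] at h ⊢
  exact tprod_one_add_ne_zero_of_summable h (summable_norm_neg_mul_pow a hp)

theorem tendsto_qP_qPInf (a : ℂ) {p : ℂ} (hp : ‖p‖ < 1) :
    Tendsto (qP a p) atTop (𝓝 (qPInf a p)) :=
  (multipliable_qPInf a hp).tendsto_prod_tprod_nat

theorem qPInf_eq_mul (a : ℂ) {p : ℂ} (hp : ‖p‖ < 1) :
    qPInf a p = (1 - a) * qPInf (a * p) p := by
  have e : (fun n : ℕ => 1 - a * p * p ^ n) = fun n => 1 - a * p ^ (n + 1) := by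
    ext n; ring
  have h : Multipliable fun n : ℕ => 1 - a * p ^ (n + 1) := e ▸ multipliable_qPInf (a * p) hp
  have h' := tprod_eq_zero_mul' (f := fun n : ℕ => 1 - a * p ^ n) h
  unfold qPInf
  rw [h', e, pow_zero, mul_one]

theorem qPInf_eq_qP_mul (a : ℂ) {p : ℂ} (hp : ‖p‖ < 1) (n : ℕ) :
    qPInf a p = qP a p n * qPInf (a * p ^ n) p := by
  induction n with
  | zero => simp [qP_zero]
  | succ n ih => rw [ih, qP_succ, qPInf_eq_mul (a * p ^ n) hp]; ring_nf

theorem tendsto_pow_succ_zero {p : ℂ} (hp : ‖p‖ < 1) :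
    Tendsto (fun m : ℕ => p * p ^ m) atTop (𝓝 0) := by
  simpa using (tendsto_pow_atTop_nhds_zero_of_norm_lt_one hp).const_mul p

/-- Euler: `∑ xᵐ / (p;p)_m` converges for `‖x‖ < 1`. -/
theorem summable_norm_inv_qP_mul_pow {p x : ℂ} (hp : ‖p‖ < 1) (hx : ‖x‖ < 1) :
    Summable fun m : ℕ => ‖(qP p p m)⁻¹ * x ^ m‖ := by
  have hg : Tendsto (fun m : ℕ => x * (1 - p * p ^ m)⁻¹) atTop (𝓝 (x * (1 - 0)⁻¹)) :=
    (((tendsto_pow_succ_zero hp).const_sub 1).inv₀ (by simp)).const_mul x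
  refine summable_norm_of_succ_eq_mul (by simpa using hx) hg fun m => ?_
  rw [qP_succ, mul_inv]; ring

theorem qPInf_mul_tsum_inv_qP {p x : ℂ} (hp : ‖p‖ < 1) (hx : ‖x‖ < 1) :
    qPInf x p * ∑' m : ℕ, (qP p p m)⁻¹ * x ^ m = 1 := by
  have hxn : ∀ n : ℕ, ‖x * p ^ n‖ < 1 := fun n => by
    rw [norm_mul, norm_pow]
    exact (mul_le_of_le_one_right (norm_nonneg _) (pow_le_one₀ (norm_nonneg _) hp.le)).trans_lt hx
  have step : ∀ y : ℂ, ‖y‖ < 1 → (1 - y) * ∑' m : ℕ, (qP p p m)⁻¹ * y ^ m =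
      ∑' m : ℕ, (qP p p m)⁻¹ * (y * p) ^ m := by
    intro y hy
    have hs := (summable_norm_inv_qP_mul_pow hp hy).of_norm
    have hs' : Summable fun m : ℕ => (qP p p m)⁻¹ * (y * p) ^ m :=
      (summable_norm_inv_qP_mul_pow hp (by simpa using
        (mul_lt_one_of_nonneg_of_lt_one_left (norm_nonneg _) hy hp.le))).of_norm
    have : ∑' m : ℕ, ((qP p p m)⁻¹ * y ^ m - (qP p p m)⁻¹ * (y * p) ^ m) =
        y * ∑' m : ℕ, (qP p p m)⁻¹ * y ^ m := by
      rw [(hs.sub hs').tsum_eq_zero_add, ← tsum_mul_left]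
      simp only [pow_zero, sub_self, zero_add]
      refine tsum_congr fun m => ?_
      have := one_sub_mul_pow_ne_zero hp hp m
      have := qP_ne_zero hp hp m
      rw [qP_succ]
      field_simp
      ring
    rw [hs.tsum_sub hs'] at this
    linear_combination this
  have iter : ∀ n : ℕ, qP x p n * ∑' m : ℕ, (qP p p m)⁻¹ * x ^ m =
      ∑' m : ℕ, (qP p p m)⁻¹ * (x * p ^ n) ^ m := by
    intro n
    induction n with
    | zero => simp [qP_zero]
    | succ n ih =>
      rw [qP_succ, mul_right_comm, ih, mul_comm, step _ (hxn n), mul_assoc, ← pow_succ]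
  have h1 := (tendsto_qP_qPInf x hp).mul_const (∑' m : ℕ, (qP p p m)⁻¹ * x ^ m)
  have h2 := tendsto_tsum_mul_pow_mul_pow hp (summable_norm_inv_qP_mul_pow hp hx)
  simp only [iter] at h1
  simpa [qP_zero] using tendsto_nhds_unique h1 h2

theorem summable_norm_choose_two {p : ℂ} (hp : ‖p‖ < 1) (x : ℂ) :
    Summable fun m : ℕ => ‖((-1) ^ m * p ^ m.choose 2 * (qP p p m)⁻¹) * x ^ m‖ := by
  have hg : Tendsto (fun m : ℕ => -x * p ^ m * (1 - p * p ^ m)⁻¹) atTop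
      (𝓝 (-x * 0 * (1 - 0)⁻¹)) :=
    ((tendsto_pow_atTop_nhds_zero_of_norm_lt_one hp).const_mul (-x)).mul
      (((tendsto_pow_succ_zero hp).const_sub 1).inv₀ (by simp))
  refine summable_norm_of_succ_eq_mul (by simp) hg fun m => ?_
  rw [qP_succ, mul_inv, Nat.choose_succ_succ' m 1, Nat.choose_one_right]; ring

theorem qPInf_eq_tsum {p : ℂ} (hp : ‖p‖ < 1) (x : ℂ) :
    qPInf x p = ∑' m : ℕ, ((-1) ^ m * p ^ m.choose 2 * (qP p p m)⁻¹) * x ^ m := by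
  set c : ℕ → ℂ := fun m => (-1) ^ m * p ^ m.choose 2 * (qP p p m)⁻¹ with hc
  have step : ∀ y : ℂ, ∑' m : ℕ, c m * y ^ m = (1 - y) * ∑' m : ℕ, c m * (y * p) ^ m := by
    intro y
    have hs := (summable_norm_choose_two hp y).of_norm
    have hs' := (summable_norm_choose_two hp (y * p)).of_norm
    have : ∑' m : ℕ, (c m * y ^ m - c m * (y * p) ^ m) =
        -y * ∑' m : ℕ, c m * (y * p) ^ m := by
      rw [(hs.sub hs').tsum_eq_zero_add, ← tsum_mul_left]
      simp only [pow_zero, sub_self, zero_add]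
      refine tsum_congr fun m => ?_
      have := one_sub_mul_pow_ne_zero hp hp m
      have := qP_ne_zero hp hp m
      simp only [hc]
      rw [qP_succ, Nat.choose_succ_succ' m 1, Nat.choose_one_right]
      field_simp
      ring
    rw [hs.tsum_sub hs'] at this
    linear_combination this
  have iter : ∀ n : ℕ, qP x p n * ∑' m : ℕ, c m * (x * p ^ n) ^ m = ∑' m : ℕ, c m * x ^ m := by
    intro n
    induction n with
    | zero => simp [qP_zero]
    | succ n ih =>
      rw [← ih, step (x * p ^ n), qP_succ]
      ring_nf
  have h := (tendsto_qP_qPInf x hp).mul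
    (tendsto_tsum_mul_pow_mul_pow (c := c) hp (summable_norm_choose_two hp x))
  simp only [iter] at h
  have := tendsto_nhds_unique tendsto_const_nhds h
  rw [this]
  simp [hc, qP_zero]

theorem summable_norm_pow_sq {q : ℂ} (hq : ‖q‖ < 1) :
    Summable fun n : ℕ => ‖q ^ (n ^ 2)‖ := by
  simp only [norm_pow]
  refine Summable.of_nonneg_of_le (fun n => by positivity) (fun n => ?_)
    (summable_geometric_of_lt_one (norm_nonneg q) hq)
  exact pow_le_pow_of_le_one (norm_nonneg _) hq.le (Nat.le_self_pow two_ne_zero n)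

theorem summable_norm_zpow_sq {q : ℂ} (hq : ‖q‖ < 1) :
    Summable fun n : ℤ => ‖q ^ (n ^ 2)‖ := by
  have h : ∀ n : ℕ, q ^ ((n : ℤ) ^ 2) = q ^ (n ^ 2) := fun n => by
    rw [← zpow_natCast]; norm_cast
  refine Summable.of_nat_of_neg ?_ ?_ <;> simpa [h] using summable_norm_pow_sq hq

theorem sq_pow_choose_two_mul_pow (q : ℂ) (m : ℕ) :
    (q ^ 2) ^ m.choose 2 * q ^ m = q ^ (m ^ 2) := by
  induction m with
  | zero => simp
  | succ m ih =>
    rw [Nat.choose_succ_succ' m 1, Nat.choose_one_right]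
    calc _ = (q ^ 2) ^ m.choose 2 * q ^ m * q ^ (2 * m + 1) := by ring
      _ = _ := by rw [ih]; ring

theorem norm_sq_lt_one {q : ℂ} (hq : ‖q‖ < 1) : ‖q ^ 2‖ < 1 := by
  rw [norm_pow]
  exact pow_lt_one₀ (norm_nonneg _) hq two_ne_zero

/-- The bilateral sum `∑ q^{n²} (b q^{2n}; q²)_∞` factors as a theta value over an infinite product. -/
theorem bilateral_sum {q b : ℂ} (hq0 : q ≠ 0) (hq : ‖q‖ < 1) (hb : ‖b / q‖ < 1) :
    (Summable fun n : ℤ => q ^ (n ^ 2) * qPInf (b * q ^ (2 * n)) (q ^ 2)) ∧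
    qPInf (-(b / q)) (q ^ 2) * ∑' n : ℤ, q ^ (n ^ 2) * qPInf (b * q ^ (2 * n)) (q ^ 2) =
      ∑' n : ℤ, q ^ (n ^ 2) := by
  have hp := norm_sq_lt_one hq
  have hb' : ‖-(b / q)‖ < 1 := by rwa [norm_neg]
  set B : ℕ → ℂ := fun m => (qP (q ^ 2) (q ^ 2) m)⁻¹ * (-(b / q)) ^ m with hB
  have hBs : Summable fun m => ‖B m‖ := summable_norm_inv_qP_mul_pow hp hb'
  have hAs := summable_norm_zpow_sq hq
  let e : ℤ × ℕ ≃ ℤ × ℕ :=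
    { toFun := fun x => (x.1 + x.2, x.2)
      invFun := fun x => (x.1 - x.2, x.2)
      left_inv := fun x => by simp
      right_inv := fun x => by simp }
  have hprod : Summable fun x : ℤ × ℕ => q ^ (x.1 ^ 2) * B x.2 := (hAs.mul_norm hBs).of_norm
  have hshift : Summable fun x : ℤ × ℕ => q ^ ((x.1 + x.2) ^ 2) * B x.2 :=
    (e.summable_iff (f := fun x : ℤ × ℕ => q ^ (x.1 ^ 2) * B x.2)).mpr hprod
  have hterm : ∀ n : ℤ, ∑' m : ℕ, q ^ ((n + m) ^ 2) * B m =
      q ^ (n ^ 2) * qPInf (b * q ^ (2 * n)) (q ^ 2) := by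
    intro n
    rw [qPInf_eq_tsum hp, ← tsum_mul_left]
    refine tsum_congr fun m => ?_
    have h1 : q ^ ((n + m) ^ 2) = q ^ (n ^ 2) * (q ^ (2 * n)) ^ m * (q ^ (m ^ 2) : ℂ) := by
      rw [← zpow_natCast, ← zpow_natCast, ← zpow_mul, ← zpow_add₀ hq0, ← zpow_add₀ hq0]
      congr 1
      push_cast
      ring
    rw [h1, ← sq_pow_choose_two_mul_pow, hB]
    have : (-(b / q)) ^ m = (-1) ^ m * b ^ m / q ^ m := by
      rw [neg_pow, div_pow]; ring
    simp only [this, mul_pow]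
    field_simp
  constructor
  · simpa only [hterm] using hshift.prod
  · simp only [← hterm]
    rw [← hshift.tsum_prod,
      show ∑' x : ℤ × ℕ, q ^ ((x.1 + x.2) ^ 2) * B x.2 = ∑' x : ℤ × ℕ, q ^ (x.1 ^ 2) * B x.2 from
        e.tsum_eq (fun x : ℤ × ℕ => q ^ (x.1 ^ 2) * B x.2),
      ← tsum_mul_tsum_of_summable_norm hAs hBs, mul_left_comm, qPInf_mul_tsum_inv_qP hp hb',
      mul_one]

theorem qPInf_eq_zero {a p : ℂ} (hp : ‖p‖ < 1) (n : ℕ) (h : a * p ^ n = 1) : qPInf a p = 0 := by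
  rw [qPInf_eq_qP_mul a hp (n + 1), qP_succ, h, sub_self, mul_zero, zero_mul]

theorem tsum_int_eq {f : ℤ → ℂ} (hf : Summable f) :
    ∑' n : ℤ, f n = ∑' n : ℕ, f n + ∑' n : ℕ, f (-((n : ℤ) + 1)) :=
  tsum_of_nat_of_neg_add_one (hf.comp_injective Nat.cast_injective)
    (hf.comp_injective (i := fun n : ℕ => -((n : ℤ) + 1)) fun a b hab => by simpa using hab)

theorem pow_eq_zpow_neg_succ {q : ℂ} (n : ℕ) :
    q ^ ((-((n : ℤ) + 1)) ^ 2) = q ^ ((n + 1) ^ 2) := by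
  rw [← zpow_natCast, neg_sq]; norm_cast

theorem zpow_natCast_sq {q : ℂ} (n : ℕ) : q ^ ((n : ℤ) ^ 2) = q ^ (n ^ 2) := by
  rw [← zpow_natCast]; norm_cast

/-- Jacobi's triple product at `z = 1`. -/
theorem tsum_zpow_sq {q : ℂ} (hq0 : q ≠ 0) (hq : ‖q‖ < 1) :
    ∑' n : ℤ, q ^ (n ^ 2) =
      qPInf (q ^ 2) (q ^ 2) * qPInf (-q) (q ^ 2) * qPInf (-q) (q ^ 2) := by
  have hp := norm_sq_lt_one hq
  obtain ⟨hs, h⟩ := bilateral_sum (b := q ^ 2) hq0 hq (by rwa [pow_two, mul_div_cancel_right₀ _ hq0])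
  have hneg : ∀ n : ℕ, qPInf (q ^ 2 * q ^ (2 * (-((n : ℤ) + 1)))) (q ^ 2) = 0 := by
    intro n
    refine qPInf_eq_zero hp n ?_
    rw [← pow_mul, ← zpow_natCast, ← zpow_natCast, ← zpow_add₀ hq0, ← zpow_add₀ hq0, ← zpow_zero q]
    congr 1
    push_cast
    ring
  have hpos : ∀ n : ℕ, q ^ ((n : ℤ) ^ 2) * qPInf (q ^ 2 * q ^ (2 * (n : ℤ))) (q ^ 2) =
      qPInf (q ^ 2) (q ^ 2) *
        (((-1) ^ n * (q ^ 2) ^ n.choose 2 * (qP (q ^ 2) (q ^ 2) n)⁻¹) * (-q) ^ n) := by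
    intro n
    have := qP_ne_zero hp hp n
    have e1 : q ^ (2 * (n : ℤ)) = (q ^ 2) ^ n := by rw [zpow_mul]; norm_cast
    rw [qPInf_eq_qP_mul (q ^ 2) hp n, e1, zpow_natCast_sq, ← sq_pow_choose_two_mul_pow,
      neg_pow q n]
    have : ((-1 : ℂ) ^ n) * (-1) ^ n = 1 := by rw [← mul_pow]; simp
    field_simp
    rw [pow_two ((-1 : ℂ) ^ n), this, mul_one]
  rw [← h, tsum_int_eq hs]
  simp only [hneg, hpos, mul_zero, tsum_zero, add_zero]
  rw [tsum_mul_left, ← qPInf_eq_tsum hp, pow_two q, mul_div_cancel_right₀ _ hq0]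
  ring

theorem pow_mul_qPInf_neg_zpow {q : ℂ} (hq0 : q ≠ 0) (hq : ‖q‖ < 1) (n : ℕ) :
    q ^ (n ^ 2 + n) * qPInf (-q ^ (-(2 * n : ℤ))) (q ^ 2) =
      2 * qP (-q ^ 2) (q ^ 2) n * qPInf (-q ^ 2) (q ^ 2) := by
  have hp := norm_sq_lt_one hq
  induction n with
  | zero =>
    have := qPInf_eq_mul (-1) hp
    simp only [neg_mul, one_mul] at this
    simp only [Nat.cast_zero, mul_zero, neg_zero, zpow_zero, qP_zero, this]
    ring
  | succ n ih =>
    have e : q ^ (-(2 * (n + 1 : ℕ) : ℤ)) * q ^ 2 = q ^ (-(2 * n : ℤ)) := by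
      rw [← zpow_natCast, ← zpow_add₀ hq0]; congr 1; push_cast; ring
    have e' : q ^ (-(2 * (n + 1 : ℕ) : ℤ)) * q ^ (2 * n + 2) = 1 := by
      rw [← zpow_natCast, ← zpow_add₀ hq0, ← zpow_zero q]; congr 1; push_cast; ring
    rw [qPInf_eq_mul _ hp, neg_mul, e, qP_succ]
    calc _ = (q ^ (2 * n + 2) + q ^ (-(2 * (n + 1 : ℕ) : ℤ)) * q ^ (2 * n + 2)) *
          (q ^ (n ^ 2 + n) * qPInf (-q ^ (-(2 * n : ℤ))) (q ^ 2)) := by ring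
      _ = _ := by rw [e', ih]; ring

/-- The specialisation of Ramanujan's `₁ψ₁` summation that governs the mock theta function `φ`. -/
theorem phi3_sub_product {q : ℂ} (hq0 : q ≠ 0) (hq : ‖q‖ < 1) :
    phi3 q - qPInf (q ^ 2) (q ^ 2) * qPInf (-q) (q ^ 2) * qPInf (-q) (q ^ 2) /
        (qPInf (-q ^ 2) (q ^ 2) * qPInf q (q ^ 2)) =
      -2 * ∑' n : ℕ, qP (-q ^ 2) (q ^ 2) n * q ^ (n + 1) := by
  have hp := norm_sq_lt_one hq
  have hdiv : -q ^ 2 / q = -q := by field_simp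
  obtain ⟨hs, h⟩ := bilateral_sum (b := -q ^ 2) hq0 hq (by rwa [hdiv, norm_neg])
  have hP0 : qPInf (-q ^ 2) (q ^ 2) ≠ 0 :=
    qPInf_ne_zero hp (one_sub_mul_pow_ne_zero hp (by rwa [norm_neg]))
  have hQ0 : qPInf q (q ^ 2) ≠ 0 := qPInf_ne_zero hp (one_sub_mul_pow_ne_zero hp hq)
  have hpos : ∀ n : ℕ, q ^ ((n : ℤ) ^ 2) * qPInf (-q ^ 2 * q ^ (2 * (n : ℤ))) (q ^ 2) =
      qPInf (-q ^ 2) (q ^ 2) * (q ^ (n ^ 2) / qP (-q ^ 2) (q ^ 2) n) := by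
    intro n
    have := qP_ne_zero (a := -q ^ 2) hp (by rwa [norm_neg]) n
    have e1 : q ^ (2 * (n : ℤ)) = (q ^ 2) ^ n := by rw [zpow_mul]; norm_cast
    rw [qPInf_eq_qP_mul (-q ^ 2) hp n, e1, zpow_natCast_sq]
    field_simp
  have hneg : ∀ n : ℕ, q ^ ((-((n : ℤ) + 1)) ^ 2) *
      qPInf (-q ^ 2 * q ^ (2 * (-((n : ℤ) + 1)))) (q ^ 2) =
        2 * qPInf (-q ^ 2) (q ^ 2) * (qP (-q ^ 2) (q ^ 2) n * q ^ (n + 1)) := by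
    intro n
    have e1 : -q ^ 2 * q ^ (2 * (-((n : ℤ) + 1))) = -q ^ (-(2 * n : ℤ)) := by
      rw [neg_mul, ← zpow_natCast, ← zpow_add₀ hq0]; congr 2; push_cast; ring
    rw [e1, pow_eq_zpow_neg_succ]
    linear_combination q ^ (n + 1) * pow_mul_qPInf_neg_zpow hq0 hq n
  rw [tsum_int_eq hs] at h
  simp only [hneg, hpos, hdiv, neg_neg, tsum_mul_left, tsum_zpow_sq hq0 hq] at h
  have hphi : phi3 q = ∑' n : ℕ, q ^ (n ^ 2) / qP (-q ^ 2) (q ^ 2) n := rfl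
  rw [← hphi] at h
  generalize ∑' n : ℕ, qP (-q ^ 2) (q ^ 2) n * q ^ (n + 1) = T at h ⊢
  rw [← h]
  field_simp
  ring

theorem norm_mul_pow_odd_pow_le {q : ℂ} (hq : ‖q‖ ≤ 1) (a : ℂ) (n m : ℕ) :
    ‖a * (q ^ (2 * n + 1)) ^ m‖ ≤ ‖a * q ^ m‖ := by
  rw [norm_mul, norm_mul, ← pow_mul, norm_pow, norm_pow]
  exact mul_le_mul_of_nonneg_left (pow_le_pow_of_le_one (norm_nonneg _) hq
    (Nat.le_mul_of_pos_left m (by omega))) (norm_nonneg _)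

theorem one_sub_mul_tsum_qP {p x : ℂ} (hs : Summable fun m : ℕ => qP (-p) p m * x ^ m)
    (hs' : Summable fun m : ℕ => qP (-p) p m * (x * p) ^ m) :
    (1 - x) * ∑' m : ℕ, qP (-p) p m * x ^ m =
      1 + x * p * ∑' m : ℕ, qP (-p) p m * (x * p) ^ m := by
  have h : ∑' m : ℕ, qP (-p) p m * x ^ m = 1 + (x * ∑' m : ℕ, qP (-p) p m * x ^ m +
      x * p * ∑' m : ℕ, qP (-p) p m * (x * p) ^ m) := by
    conv_lhs => rw [hs.tsum_eq_zero_add]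
    rw [← tsum_mul_left, ← tsum_mul_left, ← (hs.mul_left x).tsum_add (hs'.mul_left (x * p)),
      qP_zero, pow_zero, mul_one]
    congr 1
    refine tsum_congr fun m => ?_
    rw [qP_succ]
    ring
  linear_combination h

/-- Fine's transformation of `∑ (-q²;q²)_n q^{n+1}` into `∑ q^{n²} / (q;q²)_n`. -/
theorem tsum_qP_mul_pow_eq {q : ℂ} (hq : ‖q‖ ≤ 1) (h0 : ∀ n : ℕ, 1 - q * (q ^ 2) ^ n ≠ 0)
    (hs : Summable fun m : ℕ => ‖qP (-q ^ 2) (q ^ 2) m * q ^ m‖)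
    (hd : Summable fun n : ℕ => q ^ (n ^ 2) / qP q (q ^ 2) n) :
    ∑' n : ℕ, qP (-q ^ 2) (q ^ 2) n * q ^ (n + 1) =
      ∑' n : ℕ, q ^ ((n + 1) ^ 2) / qP q (q ^ 2) (n + 1) := by
  set d : ℕ → ℂ := fun n => q ^ (n ^ 2) / qP q (q ^ 2) n with hd_def
  set H : ℕ → ℂ := fun n => ∑' m : ℕ, qP (-q ^ 2) (q ^ 2) m * (q ^ (2 * n + 1)) ^ m with hH
  have hsn : ∀ n : ℕ, Summable fun m : ℕ => qP (-q ^ 2) (q ^ 2) m * (q ^ (2 * n + 1)) ^ m :=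
    fun n => Summable.of_norm_bounded hs fun m => norm_mul_pow_odd_pow_le hq _ n m
  have hbound : ∀ n : ℕ, ‖H n‖ ≤ ∑' m : ℕ, ‖qP (-q ^ 2) (q ^ 2) m * q ^ m‖ := fun n =>
    tsum_of_norm_bounded hs.hasSum fun m => norm_mul_pow_odd_pow_le hq _ n m
  have hrec : ∀ n : ℕ, (1 - q ^ (2 * n + 1)) * H n = 1 + q ^ (2 * n + 3) * H (n + 1) := by
    intro n
    have e : q ^ (2 * n + 1) * q ^ 2 = q ^ (2 * (n + 1) + 1) := by ring
    have := one_sub_mul_tsum_qP (p := q ^ 2) (x := q ^ (2 * n + 1)) (hsn n)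
      (by rw [e]; exact hsn (n + 1))
    rwa [e] at this
  have hpartial : ∀ N : ℕ, q * H 0 =
      ∑ n ∈ Finset.range N, d (n + 1) + d N * (q ^ (2 * N + 1) * H N) := by
    intro N
    induction N with
    | zero => simp [hd_def, qP_zero]
    | succ N ih =>
      have hP : qP q (q ^ 2) N ≠ 0 := Finset.prod_ne_zero_iff.mpr fun i _ => h0 i
      have h1 := h0 N
      have e : q * (q ^ 2) ^ N = q ^ (2 * N + 1) := by ring
      have hstep : d (N + 1) * (1 - q ^ (2 * N + 1)) = d N * q ^ (2 * N + 1) := by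
        rw [e] at h1
        simp only [hd_def]
        rw [qP_succ, e]
        field_simp
        ring
      rw [e] at h1
      rw [ih, Finset.sum_range_succ, add_assoc, ← mul_assoc, ← hstep, mul_assoc, hrec]
      ring
  have hlim : Tendsto (fun N => d N * (q ^ (2 * N + 1) * H N)) atTop (𝓝 0) := by
    have hd0 := hd.tendsto_atTop_zero.norm.mul_const (∑' m : ℕ, ‖qP (-q ^ 2) (q ^ 2) m * q ^ m‖)
    rw [norm_zero, zero_mul] at hd0
    refine squeeze_zero_norm (fun N => ?_) hd0
    rw [norm_mul, norm_mul, norm_pow]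
    refine mul_le_mul_of_nonneg_left ?_ (norm_nonneg _)
    exact (mul_le_of_le_one_left (norm_nonneg _) (pow_le_one₀ (norm_nonneg _) hq)).trans (hbound N)
  have hsum : Tendsto (fun N => ∑ n ∈ Finset.range N, d (n + 1)) atTop (𝓝 (∑' n, d (n + 1))) :=
    ((summable_nat_add_iff 1).mpr hd).hasSum.tendsto_sum_nat
  have h := hsum.add hlim
  simp only [← hpartial, add_zero] at h
  have := tendsto_nhds_unique tendsto_const_nhds h
  rw [← this, hH, ← tsum_mul_left]
  refine tsum_congr fun m => ?_
  ring

theorem summable_norm_qP_neg_mul_pow {q : ℂ} (hq : ‖q‖ < 1) :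
    Summable fun m : ℕ => ‖qP (-q ^ 2) (q ^ 2) m * q ^ m‖ := by
  have hg : Tendsto (fun m : ℕ => q * (1 + q ^ 2 * (q ^ 2) ^ m)) atTop (𝓝 (q * (1 + 0))) :=
    ((tendsto_pow_succ_zero (norm_sq_lt_one hq)).const_add 1).const_mul q
  refine summable_norm_of_succ_eq_mul (by simpa using hq) hg fun m => ?_
  rw [qP_succ]; ring

theorem summable_pow_div {r : ℝ} (hr0 : 0 ≤ r) (hr : r < 1) {M : ℕ} (hM : 0 < M) :
    Summable fun n : ℕ => r ^ (n / M) := by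
  have : NeZero M := ⟨hM.ne'⟩
  have h : Summable fun x : ℕ × Fin M => r ^ x.1 * 1 :=
    (summable_geometric_of_lt_one hr0 hr).mul_of_nonneg
      (Summable.of_finite (f := fun _ : Fin M => (1 : ℝ))) (fun n => by positivity)
      (fun _ => zero_le_one)
  have h' := (Nat.divModEquiv M).summable_iff.mpr h
  refine h'.congr fun n => ?_
  simp [Nat.divModEquiv]

theorem le_mul_pow_div {u : ℕ → ℝ} {C r : ℝ} {M : ℕ} (hM : 0 < M) (hr : 0 ≤ r)
    (hC : ∀ n < M, u n ≤ C) (h : ∀ n, u (n + M) ≤ r * u n) (n : ℕ) :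
    u n ≤ C * r ^ (n / M) := by
  induction n using Nat.strong_induction_on with
  | _ n ih =>
    rcases lt_or_ge n M with hn | hn
    · simpa [Nat.div_eq_of_lt hn] using hC n hn
    · obtain ⟨m, rfl⟩ := Nat.exists_eq_add_of_le' hn
      rw [Nat.add_div_right _ hM, pow_succ]
      calc u (m + M) ≤ r * u m := h m
        _ ≤ r * (C * r ^ (m / M)) := mul_le_mul_of_nonneg_left (ih m (by omega)) hr
        _ = _ := by ring

theorem IsPrimitiveRoot.pow_two_mul_eq_neg_one {k : ℕ} (hk : 0 < k) {ζ : ℂ}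
    (hζ : IsPrimitiveRoot ζ (4 * k)) : ζ ^ (2 * k) = -1 := by
  have h := hζ.pow (by omega) (show 4 * k = (2 * k) * 2 by ring)
  exact h.eq_neg_one_of_two_right

theorem prod_one_sub_odd_pow {k : ℕ} (hk : 0 < k) {ζ : ℂ} (hζ : IsPrimitiveRoot ζ (4 * k))
    (z : ℂ) : ∏ j ∈ Finset.range (2 * k), (1 - z * ζ ^ (2 * j + 1)) = 1 + z ^ (2 * k) := by
  have h2 : IsPrimitiveRoot (ζ ^ 2) (2 * k) := hζ.pow (by omega) (by ring)
  have e : (z * ζ) ^ (2 * k) = -z ^ (2 * k) := by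
    rw [mul_pow, hζ.pow_two_mul_eq_neg_one hk]; ring
  have h := congrArg (Polynomial.eval 1) (X_pow_sub_C_eq_prod h2 (by omega) e)
  simp only [Polynomial.eval_sub, Polynomial.eval_pow, Polynomial.eval_X, Polynomial.eval_C,
    Polynomial.eval_prod, one_pow, sub_neg_eq_add] at h
  rw [h]
  refine Finset.prod_congr rfl fun j _ => ?_
  ring

theorem qP_add (a q : ℂ) (n m : ℕ) :
    qP a q (n + m) = qP a q n * ∏ j ∈ Finset.range m, (1 - a * q ^ (n + j)) :=
  Finset.prod_range_add _ _ _

theorem one_sub_odd_pow_ne_zero {k : ℕ} {ζ : ℂ} (hζ : IsPrimitiveRoot ζ (4 * k)) (n : ℕ) :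
    1 - ζ * (ζ ^ 2) ^ n ≠ 0 := by
  intro h
  have h1 : ζ ^ (2 * n + 1) = 1 := by
    linear_combination -h
  have : 2 ∣ 2 * n + 1 := (Dvd.intro (2 * k) (by ring)).trans (hζ.dvd_of_pow_eq_one _ h1)
  omega

/-- Near a primitive `4k`-th root of unity, a full period of factors `1 - q^{2n+2j+1}` dominates
the growth of `q^{n²}`, uniformly in `n`. -/
theorem eventually_block_bound {k : ℕ} (hk : 0 < k) {ζ : ℂ} (hζ : IsPrimitiveRoot ζ (4 * k)) :
    ∀ᶠ t : ℝ in 𝓝[Set.Ioc 0 1] 1, ∀ n : ℕ,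
      4 * ‖((t : ℂ) * ζ) ^ (2 * n)‖ ^ (2 * k) ≤
        3 * ‖∏ j ∈ Finset.range (2 * k),
          (1 - ((t : ℂ) * ζ) ^ (2 * n) * ((t : ℂ) * ζ) ^ (2 * j + 1))‖ := by
  set K : Set ℂ := Metric.closedBall 0 1 ∩ {z | z ^ (2 * k) = (‖z‖ : ℂ) ^ (2 * k)} with hK
  have hKc : IsCompact K := (isCompact_closedBall 0 1).inter_right
    (isClosed_eq (by fun_prop) (by fun_prop))
  have hev : ∀ᶠ t : ℝ in 𝓝 1, ∀ z ∈ K, 4 * ‖z‖ ^ (2 * k) <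
      3 * ‖∏ j ∈ Finset.range (2 * k), (1 - z * ((t : ℂ) * ζ) ^ (2 * j + 1))‖ := by
    refine hKc.eventually_forall_of_forall_eventually fun z hz => ?_
    have hcont : Continuous fun x : ℝ × ℂ => 3 * ‖∏ j ∈ Finset.range (2 * k),
        (1 - x.2 * ((x.1 : ℂ) * ζ) ^ (2 * j + 1))‖ := by fun_prop
    have hcont' : Continuous fun x : ℝ × ℂ => 4 * ‖x.2‖ ^ (2 * k) := by fun_prop
    refine hcont'.continuousAt.eventually_lt hcont.continuousAt ?_
    have hz1 : ‖z‖ ≤ 1 := by simpa using hz.1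
    have hz2 : z ^ (2 * k) = (‖z‖ : ℂ) ^ (2 * k) := hz.2
    have hy : ‖z‖ ^ (2 * k) ≤ 1 := pow_le_one₀ (norm_nonneg _) hz1
    have hy0 : 0 ≤ ‖z‖ ^ (2 * k) := by positivity
    simp only [Complex.ofReal_one, one_mul]
    rw [prod_one_sub_odd_pow hk hζ, hz2]
    have : ‖(1 : ℂ) + (‖z‖ : ℂ) ^ (2 * k)‖ = 1 + ‖z‖ ^ (2 * k) := by
      rw [← Complex.ofReal_pow, ← Complex.ofReal_one, ← Complex.ofReal_add, Complex.norm_real,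
        Real.norm_of_nonneg (by positivity)]
    rw [this]
    linarith
  filter_upwards [nhdsWithin_le_nhds hev, self_mem_nhdsWithin] with t ht ht01 n
  refine (ht _ ⟨?_, ?_⟩).le
  · have hζ1 : ‖ζ‖ = 1 := hζ.norm'_eq_one (by omega)
    rw [mem_closedBall_zero_iff, norm_pow, norm_mul, hζ1, mul_one, Complex.norm_real,
      Real.norm_of_nonneg ht01.1.le]
    exact pow_le_one₀ ht01.1.le ht01.2
  · have hζ1 : ‖ζ‖ = 1 := hζ.norm'_eq_one (by omega)
    have e : (ζ ^ (2 * n)) ^ (2 * k) = 1 := by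
      rw [← pow_mul, show 2 * n * (2 * k) = 4 * k * n by ring, pow_mul, hζ.pow_eq_one, one_pow]
    rw [Set.mem_ofPred_eq, norm_pow, norm_mul, hζ1, mul_one, Complex.norm_real,
      Real.norm_of_nonneg ht01.1.le, mul_pow, mul_pow, e, mul_one]
    push_cast
    rfl

theorem continuousAt_pow_sq_div_qP {q : ℂ} (h0 : ∀ n : ℕ, 1 - q * (q ^ 2) ^ n ≠ 0) (n : ℕ) :
    ContinuousAt (fun x : ℂ => x ^ (n ^ 2) / qP x (x ^ 2) n) q := by
  refine ContinuousAt.div (by fun_prop) ?_ (Finset.prod_ne_zero_iff.mpr fun i _ => h0 i)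
  unfold qP
  fun_prop

theorem exists_summable_bound {k : ℕ} (hk : 0 < k) {ζ : ℂ} (hζ : IsPrimitiveRoot ζ (4 * k)) :
    ∃ bound : ℕ → ℝ, Summable bound ∧ ∀ᶠ t : ℝ in 𝓝[Set.Ioc 0 1] 1, ∀ n : ℕ,
      ‖((t : ℂ) * ζ) ^ (n ^ 2) / qP ((t : ℂ) * ζ) (((t : ℂ) * ζ) ^ 2) n‖ ≤ bound n := by
  have hM : 0 < 2 * k := by omega
  have hζ1 : ‖ζ‖ = 1 := hζ.norm'_eq_one (by omega)
  set d : ℝ → ℕ → ℂ := fun t n =>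
    ((t : ℂ) * ζ) ^ (n ^ 2) / qP ((t : ℂ) * ζ) (((t : ℂ) * ζ) ^ 2) n with hd
  have hcont : ∀ n, ContinuousAt (fun t : ℝ => d t n) 1 := fun n => by
    have h1 : ContinuousAt (fun t : ℝ => (t : ℂ) * ζ) 1 := by fun_prop
    refine ContinuousAt.comp_of_eq (continuousAt_pow_sq_div_qP (one_sub_odd_pow_ne_zero hζ) n) h1 ?_
    simp
  obtain ⟨C, hC⟩ : ∃ C : ℝ, ∀ n < 2 * k, ‖d 1 n‖ < C :=
    ⟨1 + ∑ n ∈ Finset.range (2 * k), ‖d 1 n‖, fun n hn => by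
      have := Finset.single_le_sum (f := fun n => ‖d 1 n‖) (fun i _ => norm_nonneg _)
        (Finset.mem_range.mpr hn)
      linarith⟩
  have hinit : ∀ᶠ t : ℝ in 𝓝 1, ∀ n ∈ Finset.range (2 * k), ‖d t n‖ < C :=
    (Filter.eventually_all_finset _).mpr fun n hn =>
      (hcont n).norm.eventually_lt continuousAt_const (hC n (Finset.mem_range.mp hn))
  refine ⟨fun n => C * (3 / 4) ^ (n / (2 * k)),
    (summable_pow_div (by norm_num) (by norm_num) hM).mul_left C, ?_⟩
  filter_upwards [nhdsWithin_le_nhds hinit, eventually_block_bound hk hζ, self_mem_nhdsWithin]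
    with t hinit hblock ht
  refine le_mul_pow_div hM (by norm_num) (fun n hn => (hinit n (Finset.mem_range.mpr hn)).le)
    fun n => ?_
  have hq1 : ‖(t : ℂ) * ζ‖ ≤ 1 := by
    rw [norm_mul, hζ1, mul_one, Complex.norm_real, Real.norm_of_nonneg ht.1.le]
    exact ht.2
  have hq0 : (t : ℂ) * ζ ≠ 0 :=
    mul_ne_zero (by exact_mod_cast ht.1.ne') (hζ.ne_zero (by omega))
  set q : ℂ := (t : ℂ) * ζ
  have hb := hblock n
  have e : ∏ j ∈ Finset.range (2 * k), (1 - q * (q ^ 2) ^ (n + j)) =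
      ∏ j ∈ Finset.range (2 * k), (1 - q ^ (2 * n) * q ^ (2 * j + 1)) :=
    Finset.prod_congr rfl fun j _ => by ring
  have hpos : 0 < ‖∏ j ∈ Finset.range (2 * k), (1 - q ^ (2 * n) * q ^ (2 * j + 1))‖ := by
    have : 0 < ‖q ^ (2 * n)‖ ^ (2 * k) := pow_pos (norm_pos_iff.mpr (pow_ne_zero _ hq0)) _
    linarith
  have hd1 : ‖d t (n + 2 * k)‖ = ‖d t n‖ * (‖q‖ ^ ((2 * k) ^ 2) * ‖q ^ (2 * n)‖ ^ (2 * k) /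
      ‖∏ j ∈ Finset.range (2 * k), (1 - q ^ (2 * n) * q ^ (2 * j + 1))‖) := by
    change ‖q ^ ((n + 2 * k) ^ 2) / qP q (q ^ 2) (n + 2 * k)‖ = ‖q ^ (n ^ 2) / qP q (q ^ 2) n‖ * _
    rw [qP_add, e, norm_div, norm_div, norm_mul, div_mul_div_comm]
    congr 1
    simp only [norm_pow]
    ring
  rw [hd1, mul_comm]
  refine mul_le_mul_of_nonneg_right ?_ (norm_nonneg _)
  rw [div_le_iff₀ hpos]
  have : ‖q‖ ^ ((2 * k) ^ 2) * ‖q ^ (2 * n)‖ ^ (2 * k) ≤ ‖q ^ (2 * n)‖ ^ (2 * k) :=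
    mul_le_of_le_one_left (by positivity) (pow_le_one₀ (norm_nonneg _) hq1)
  linarith

theorem qP_neg_sq_eq_zero {k : ℕ} (hk : 0 < k) {ζ : ℂ} (hζ : IsPrimitiveRoot ζ (4 * k)) {n : ℕ}
    (hn : n ∉ Finset.range k) : qP (-ζ ^ 2) (ζ ^ 2) n = 0 := by
  refine Finset.prod_eq_zero (i := k - 1) (Finset.mem_range.mpr ?_) ?_
  · rw [Finset.mem_range] at hn; omega
  · obtain ⟨m, rfl⟩ := Nat.exists_eq_succ_of_ne_zero hk.ne'
    have := hζ.pow_two_mul_eq_neg_one hk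
    rw [Nat.succ_sub_one, Nat.succ_eq_add_one] at *
    linear_combination this

theorem stmt2 (k : ℕ) (hk : 0 < k) (ζ : ℂ) (hζ : IsPrimitiveRoot ζ (4 * k)) :
    Tendsto (fun t : ℝ =>
        phi3 ((t : ℂ) * ζ) -
          qPInf (((t : ℂ) * ζ) ^ 2) (((t : ℂ) * ζ) ^ 2) *
            qPInf (-((t : ℂ) * ζ)) (((t : ℂ) * ζ) ^ 2) *
            qPInf (-((t : ℂ) * ζ)) (((t : ℂ) * ζ) ^ 2) /
          (qPInf (-((t : ℂ) * ζ) ^ 2) (((t : ℂ) * ζ) ^ 2) *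
            qPInf ((t : ℂ) * ζ) (((t : ℂ) * ζ) ^ 2)))
      (nhdsWithin 1 (Set.Ioo (0 : ℝ) 1))
      (nhds (-2 * ∑ n ∈ Finset.range k,
          (∏ j ∈ Finset.range n, (1 + ζ ^ (2 * j + 2))) * ζ ^ (n + 1))) := by
  have hζ1 : ‖ζ‖ = 1 := hζ.norm'_eq_one (by omega)
  have hζ0 := one_sub_odd_pow_ne_zero hζ
  obtain ⟨bound, hbs, hb⟩ := exists_summable_bound hk hζ
  have hb1 := hb.self_of_nhdsWithin (by simp)
  simp only [Complex.ofReal_one, one_mul] at hb1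
  have hζsum : ∑ n ∈ Finset.range k, (∏ j ∈ Finset.range n, (1 + ζ ^ (2 * j + 2))) * ζ ^ (n + 1) =
      ∑' n : ℕ, ζ ^ ((n + 1) ^ 2) / qP ζ (ζ ^ 2) (n + 1) := by
    rw [← tsum_qP_mul_pow_eq hζ1.le hζ0
      (summable_of_ne_finset_zero (s := Finset.range k) fun n hn => by
        rw [qP_neg_sq_eq_zero hk hζ hn, zero_mul, norm_zero])
      (Summable.of_norm_bounded hbs hb1),
      tsum_eq_sum (s := Finset.range k) fun n hn => by rw [qP_neg_sq_eq_zero hk hζ hn, zero_mul]]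
    refine Finset.sum_congr rfl fun n _ => ?_
    congr 1
    refine Finset.prod_congr rfl fun j _ => ?_
    ring
  have hb' := hb.filter_mono (nhdsWithin_mono 1 Set.Ioo_subset_Ioc_self)
  rw [hζsum]
  refine Tendsto.congr' (f₁ := fun t : ℝ => -2 * ∑' n : ℕ, ((t : ℂ) * ζ) ^ ((n + 1) ^ 2) /
    qP ((t : ℂ) * ζ) (((t : ℂ) * ζ) ^ 2) (n + 1)) ?_ ?_
  · filter_upwards [hb', self_mem_nhdsWithin] with t hbt ht
    have hq1 : ‖(t : ℂ) * ζ‖ < 1 := by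
      rw [norm_mul, hζ1, mul_one, Complex.norm_real, Real.norm_of_nonneg ht.1.le]
      exact ht.2
    have hq0 : (t : ℂ) * ζ ≠ 0 :=
      mul_ne_zero (by exact_mod_cast ht.1.ne') (hζ.ne_zero (by omega))
    rw [phi3_sub_product hq0 hq1, tsum_qP_mul_pow_eq hq1.le
      (one_sub_mul_pow_ne_zero (norm_sq_lt_one hq1) hq1) (summable_norm_qP_neg_mul_pow hq1)
      (Summable.of_norm_bounded hbs hbt)]
  · refine Tendsto.const_mul _ (tendsto_tsum_of_dominated_convergence
      ((summable_nat_add_iff 1).mpr hbs) (fun n => ?_) (hb'.mono fun t ht n => ht (n + 1)))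
    have h1 : Tendsto (fun t : ℝ => (t : ℂ) * ζ) (𝓝[Set.Ioo 0 1] 1) (𝓝 ζ) := by
      have : Continuous fun t : ℝ => (t : ℂ) * ζ := by fun_prop
      simpa using (this.tendsto 1).mono_left nhdsWithin_le_nhds
    exact (continuousAt_pow_sq_div_qP hζ0 (n + 1)).tendsto.comp h1
end

section
/- If ζ is a primitive root of unity of even order 2k, then as q approaches ζ radially within the unit disk, lim_{q→ζ} ( f₀(q) − [4q(q⁴,q¹⁶,q²⁰;q²⁰)_∞/(q²;q⁴)_∞ + (q²,q³,q⁵;q⁵)_∞/(−q;q)_∞] ) = −2 Σ_{n=0}^{k−1} (1+ζ)(1+ζ²)···(1+ζⁿ) ζ^{(n+1)(n+2)/2}. -/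
open scoped BigOperators
open Filter

/-- Ramanujan's fifth order mock theta function f₀ -/
noncomputable def f0 (q : ℂ) : ℂ := ∑' n : ℕ, q ^ (n ^ 2) / qP (-q) q n

namespace MockTheta

/-! ### Infinite products -/

theorem summable_norm_mul_pow (a : ℂ) {q : ℂ} (hq : ‖q‖ < 1) :
    Summable fun n : ℕ => ‖-(a * q ^ n)‖ := by
  simpa [norm_mul, norm_pow] using
    (summable_geometric_of_lt_one (norm_nonneg q) hq).mul_left ‖a‖

theorem multipliable_one_sub_mul_pow (a : ℂ) {q : ℂ} (hq : ‖q‖ < 1) :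
    Multipliable fun n : ℕ => (1 - a * q ^ n) := by
  simpa [sub_eq_add_neg] using multipliable_one_add_of_summable (summable_norm_mul_pow a hq)

theorem tendsto_qP (a : ℂ) {q : ℂ} (hq : ‖q‖ < 1) :
    Tendsto (qP a q) atTop (nhds (qPInf a q)) :=
  (multipliable_one_sub_mul_pow a hq).hasProd.tendsto_prod_nat

theorem qPInf_eq_mul (a : ℂ) {q : ℂ} (hq : ‖q‖ < 1) :
    qPInf a q = (1 - a) * qPInf (a * q) q := by
  have h := tprod_eq_zero_mul' (f := fun n : ℕ => (1 - a * q ^ n)) (by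
    simpa [pow_succ', mul_assoc] using multipliable_one_sub_mul_pow (a * q) hq)
  simpa [qPInf, pow_succ', mul_assoc] using h

theorem qPInf_eq_qP_mul (a : ℂ) {q : ℂ} (hq : ‖q‖ < 1) (n : ℕ) :
    qPInf a q = qP a q n * qPInf (a * q ^ n) q := by
  induction n with
  | zero => simp [qP]
  | succ n ih =>
    rw [ih, qPInf_eq_mul (a * q ^ n) hq]
    simp [qP, Finset.prod_range_succ, pow_succ, mul_assoc]

theorem one_sub_ne_zero_of_norm_lt {x : ℂ} (hx : ‖x‖ < 1) : 1 - x ≠ 0 := by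
  intro h
  rw [← sub_eq_zero.mp h] at hx
  simp at hx

theorem norm_mul_pow_lt {a q : ℂ} (hq : ‖q‖ < 1) (ha : ‖a‖ < 1) (n : ℕ) : ‖a * q ^ n‖ < 1 := by
  rw [norm_mul, norm_pow]
  exact mul_lt_one_of_nonneg_of_lt_one_left (norm_nonneg _) ha
    (pow_le_one₀ (norm_nonneg _) hq.le)

theorem qPInf_ne_zero {a q : ℂ} (hq : ‖q‖ < 1) (ha : ‖a‖ < 1) : qPInf a q ≠ 0 := by
  have h := tprod_one_add_ne_zero_of_summable (f := fun n : ℕ => -(a * q ^ n))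
    (fun n => by
      simpa [sub_eq_add_neg] using one_sub_ne_zero_of_norm_lt (norm_mul_pow_lt hq ha n))
    (summable_norm_mul_pow a hq)
  simpa [qPInf, sub_eq_add_neg] using h

theorem qP_ne_zero {a q : ℂ} (hq : ‖q‖ < 1) (ha : ‖a‖ < 1) (n : ℕ) : qP a q n ≠ 0 :=
  Finset.prod_ne_zero_iff.mpr fun i _ => one_sub_ne_zero_of_norm_lt (norm_mul_pow_lt hq ha i)

theorem norm_sq_lt_one {q : ℂ} (hq : ‖q‖ < 1) {n : ℕ} (hn : n ≠ 0) : ‖q ^ n‖ < 1 := by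
  rw [norm_pow]; exact pow_lt_one₀ (norm_nonneg _) hq hn

theorem qPInf_mul_neg (a : ℂ) {q : ℂ} (hq : ‖q‖ < 1) :
    qPInf a q * qPInf (-a) q = qPInf (a ^ 2) (q ^ 2) := by
  unfold qPInf
  rw [← (multipliable_one_sub_mul_pow a hq).tprod_mul (multipliable_one_sub_mul_pow (-a) hq)]
  refine tprod_congr fun n => ?_
  ring

theorem qPInf_even_odd (a : ℂ) {q : ℂ} (hq : ‖q‖ < 1) :
    qPInf a (q ^ 2) * qPInf (a * q) (q ^ 2) = qPInf a q := by
  unfold qPInf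
  have h2 : ‖q ^ 2‖ < 1 := norm_sq_lt_one hq two_ne_zero
  rw [← tprod_even_mul_odd (f := fun n : ℕ => (1 - a * q ^ n))]
  · congr 1 <;> refine tprod_congr fun n => ?_ <;> ring
  · simpa [pow_mul] using multipliable_one_sub_mul_pow a h2
  · simpa [pow_mul, pow_succ', mul_assoc] using multipliable_one_sub_mul_pow (a * q) h2

theorem qPInf_self_mul_neg {q : ℂ} (hq : ‖q‖ < 1) :
    qPInf q q * qPInf (-q) q = qPInf (q ^ 2) (q ^ 2) := qPInf_mul_neg q hq

theorem qPInf_odd_mul_self {q : ℂ} (hq : ‖q‖ < 1) :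
    qPInf q (q ^ 2) * qPInf (q ^ 2) (q ^ 2) = qPInf q q := by
  simpa [sq] using qPInf_even_odd q hq

theorem qPInf_odd_mul_neg {q : ℂ} (hq : ‖q‖ < 1) :
    qPInf q (q ^ 2) * qPInf (-q) q = 1 := by
  have h2 : ‖q ^ 2‖ < 1 := norm_sq_lt_one hq two_ne_zero
  refine mul_right_cancel₀ (qPInf_ne_zero h2 h2) ?_
  linear_combination qPInf (-q) q * qPInf_odd_mul_self hq + qPInf_self_mul_neg hq

/-! ### Reciprocals of `(q;q)_n`, extended by zero to negative indices -/

/-- `1/(q;q)_n` for `n ≥ 0`, and `0` for `n < 0`. -/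
noncomputable def recQ (q : ℂ) (n : ℤ) : ℂ := if n < 0 then 0 else (qP q q n.toNat)⁻¹

theorem recQ_of_neg (q : ℂ) {n : ℤ} (hn : n < 0) : recQ q n = 0 := if_pos hn

@[simp] theorem recQ_natCast (q : ℂ) (n : ℕ) : recQ q n = (qP q q n)⁻¹ := by
  simp [recQ]

@[simp] theorem recQ_zero (q : ℂ) : recQ q 0 = 1 := by simp [recQ, qP]

theorem one_sub_zpow_mul_recQ {q : ℂ} (hq : ‖q‖ < 1) (n : ℤ) :
    (1 - q ^ n) * recQ q n = recQ q (n - 1) := by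
  rcases lt_trichotomy n 0 with hn | rfl | hn
  · rw [recQ_of_neg q hn, recQ_of_neg q (by omega), mul_zero]
  · rw [recQ_of_neg q (n := 0 - 1) (by omega)]; simp
  · obtain ⟨m, rfl⟩ : ∃ m : ℕ, n = (m + 1 : ℕ) := ⟨n.toNat - 1, by omega⟩
    have h1 : ((m + 1 : ℕ) : ℤ) - 1 = (m : ℕ) := by push_cast; ring
    have h2 : 1 - q * q ^ m ≠ 0 := one_sub_ne_zero_of_norm_lt (norm_mul_pow_lt hq hq m)
    rw [h1, recQ_natCast, recQ_natCast, zpow_natCast, qP, Finset.prod_range_succ, ← qP,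
      mul_inv, pow_succ']
    field_simp

theorem exists_recQ_bound {ρ : ℝ} (h0 : 0 ≤ ρ) (h1 : ρ < 1) :
    ∃ C : ℝ, 0 < C ∧ ∀ q : ℂ, ‖q‖ ≤ ρ → ∀ n : ℤ, ‖recQ q n‖ ≤ C := by
  have hρ : ‖(ρ : ℂ)‖ < 1 := by simpa [abs_of_nonneg h0] using h1
  have ht := ((tendsto_qP (ρ : ℂ) hρ).inv₀ (qPInf_ne_zero hρ hρ)).norm
  obtain ⟨C, hC⟩ := ht.bddAbove_range
  have hC' : ∀ n, ‖(qP (ρ : ℂ) ρ n)⁻¹‖ ≤ C := fun n => hC ⟨n, rfl⟩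
  have hC1 : 1 ≤ C := by simpa [qP] using hC' 0
  refine ⟨C, by linarith, fun q hq n => ?_⟩
  by_cases hn : n < 0
  · rw [recQ_of_neg q hn, norm_zero]; linarith
  obtain ⟨m, rfl⟩ := Int.eq_ofNat_of_zero_le (not_lt.mp hn)
  rw [recQ_natCast]
  refine le_trans ?_ (hC' m)
  rw [norm_inv, norm_inv]
  have hq1 : ‖q‖ < 1 := hq.trans_lt h1
  refine inv_anti₀ (norm_pos_iff.mpr (qP_ne_zero hρ hρ m)) ?_
  rw [qP, qP, norm_prod, norm_prod]
  refine Finset.prod_le_prod (fun _ _ => norm_nonneg _) fun i _ => ?_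
  have e1 : ‖(1 : ℂ) - ρ * ρ ^ i‖ = 1 - ρ ^ (i + 1) := by
    have : (1 : ℂ) - ρ * ρ ^ i = ((1 - ρ ^ (i + 1) : ℝ) : ℂ) := by push_cast; ring
    rw [this, Complex.norm_real, Real.norm_of_nonneg]
    linarith [pow_le_one₀ (n := i + 1) h0 h1.le]
  have e2 : ‖q * q ^ i‖ ≤ ρ ^ (i + 1) := by
    rw [← pow_succ', norm_pow]; exact pow_le_pow_left₀ (norm_nonneg _) hq _
  have e3 := norm_sub_norm_le (1 : ℂ) (q * q ^ i)
  rw [norm_one] at e3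
  rw [e1]; linarith

theorem tendsto_recQ {q : ℂ} (hq : ‖q‖ < 1) :
    Tendsto (fun n : ℕ => recQ q n) atTop (nhds (qPInf q q)⁻¹) := by
  simpa using (tendsto_qP q hq).inv₀ (qPInf_ne_zero hq hq)

/-! ### Triangular numbers and Gaussian sums -/

/-- The triangular number `n(n-1)/2`. -/
def tri (n : ℤ) : ℤ := n * (n - 1) / 2

theorem two_mul_tri (n : ℤ) : 2 * tri n = n * (n - 1) := by
  have : 2 ∣ n * (n - 1) := by
    rcases Int.even_or_odd' n with ⟨k, rfl | rfl⟩
    · exact ⟨k * (2 * k - 1), by ring⟩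
    · exact ⟨(2 * k + 1) * k, by ring⟩
  unfold tri; omega

theorem tri_add (m n : ℤ) : tri (m + n) = tri m + tri n + m * n := by
  have := two_mul_tri m
  have := two_mul_tri n
  have := two_mul_tri (m + n)
  linarith

theorem tri_add_one (n : ℤ) : tri (n + 1) = tri n + n := by
  have := two_mul_tri n
  have := two_mul_tri (n + 1)
  linarith

theorem tri_neg (n : ℤ) : tri (-n) = tri n + n := by
  have := two_mul_tri n
  have := two_mul_tri (-n)
  linarith

@[simp] theorem tri_zero : tri 0 = 0 := rfl

theorem tri_nonneg (n : ℤ) : 0 ≤ tri n := by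
  have := two_mul_tri n
  rcases le_or_gt n 0 with h | h <;> nlinarith

theorem summable_zpow_mul_tri_nat {z q : ℂ} (hz : z ≠ 0) (hq0 : q ≠ 0) (hq : ‖q‖ < 1) :
    Summable fun n : ℕ => z ^ (n : ℤ) * q ^ tri n := by
  refine summable_of_ratio_test_tendsto_lt_one zero_lt_one
    (Eventually.of_forall fun n => mul_ne_zero (zpow_ne_zero _ hz) (zpow_ne_zero _ hq0)) ?_
  have h : ∀ n : ℕ, ‖z ^ ((n + 1 : ℕ) : ℤ) * q ^ tri ((n + 1 : ℕ) : ℤ)‖ /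
      ‖z ^ (n : ℤ) * q ^ tri n‖ = ‖z‖ * ‖q‖ ^ n := by
    intro n
    push_cast
    rw [tri_add_one, zpow_add₀ hz, zpow_add₀ hq0, ← norm_div, zpow_one, zpow_natCast q n]
    rw [← norm_pow, ← norm_mul]
    congr 1
    have := zpow_ne_zero (n : ℤ) hz
    have := zpow_ne_zero (tri n) hq0
    field_simp
  simp_rw [h]
  simpa using (tendsto_pow_atTop_nhds_zero_of_lt_one (norm_nonneg q) hq).const_mul ‖z‖

theorem summable_zpow_mul_tri {z q : ℂ} (hz : z ≠ 0) (hq0 : q ≠ 0) (hq : ‖q‖ < 1) :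
    Summable fun n : ℤ => z ^ n * q ^ tri n := by
  refine Summable.of_nat_of_neg (summable_zpow_mul_tri_nat hz hq0 hq) ?_
  refine (summable_zpow_mul_tri_nat (z := q / z) (div_ne_zero hq0 hz) hq0 hq).congr fun n => ?_
  rw [tri_neg, zpow_add₀ hq0, div_zpow, zpow_neg]
  ring

theorem summable_zpow_mul_sq {z q : ℂ} (hz : z ≠ 0) (hq0 : q ≠ 0) (hq : ‖q‖ < 1) :
    Summable fun n : ℤ => z ^ n * q ^ (n ^ 2) := by
  refine (summable_zpow_mul_tri (z := z * q) (q := q ^ 2) (mul_ne_zero hz hq0)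
    (pow_ne_zero 2 hq0) (norm_sq_lt_one hq two_ne_zero)).congr fun n => ?_
  rw [mul_zpow, mul_assoc, ← zpow_natCast q 2, ← zpow_mul, ← zpow_add₀ hq0]
  congr 2
  have := two_mul_tri n
  push_cast
  linarith

/-! ### Euler's expansions -/

theorem tendsto_tsum_zpow_mul {a : ℤ → ℂ} (ha : ∀ j < 0, a j = 0) {x : ℂ}
    (hs : Summable fun j : ℤ => x ^ j * a j) {y : ℕ → ℂ} (hy : ∀ n, ‖y n‖ ≤ ‖x‖)
    (hy0 : Tendsto y atTop (nhds 0)) :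
    Tendsto (fun n => ∑' j : ℤ, y n ^ j * a j) atTop (nhds (a 0)) := by
  have key : Tendsto (fun n => ∑' j : ℤ, y n ^ j * a j) atTop
      (nhds (∑' j : ℤ, if j = 0 then a 0 else 0)) := by
    refine tendsto_tsum_of_dominated_convergence hs.norm (fun j => ?_)
      (Eventually.of_forall fun n j => ?_)
    · rcases lt_trichotomy j 0 with hj | rfl | hj
      · simp [ha j hj, hj.ne]
      · simp
      · obtain ⟨m, rfl⟩ := Int.eq_ofNat_of_zero_le hj.le
        have hm : m ≠ 0 := by rintro rfl; simp at hj
        simpa [hm] using (hy0.pow m).mul_const (a m)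
    · rcases lt_or_ge j 0 with hj | hj
      · simp [ha j hj]
      · obtain ⟨m, rfl⟩ := Int.eq_ofNat_of_zero_le hj
        simp only [norm_mul, zpow_natCast, norm_pow]
        gcongr
        exact hy n
  simpa using key

theorem tendsto_mul_pow_zero (x : ℂ) {q : ℂ} (hq : ‖q‖ < 1) :
    Tendsto (fun n : ℕ => x * q ^ n) atTop (nhds 0) := by
  simpa using (tendsto_pow_atTop_nhds_zero_of_norm_lt_one hq).const_mul x

theorem norm_mul_pow_le (x : ℂ) {q : ℂ} (hq : ‖q‖ < 1) (n : ℕ) : ‖x * q ^ n‖ ≤ ‖x‖ := by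
  rw [norm_mul, norm_pow]
  exact mul_le_of_le_one_right (norm_nonneg _) (pow_le_one₀ (norm_nonneg _) hq.le)

theorem summable_of_norm_le_mul {ι : Type*} {f g : ι → ℂ} (C : ℝ) (hg : Summable g)
    (h : ∀ i, ‖f i‖ ≤ C * ‖g i‖) : Summable f :=
  Summable.of_norm_bounded (hg.norm.mul_left C) h

theorem summable_mul_recQ {q : ℂ} (hq : ‖q‖ < 1) {g : ℤ → ℂ} (hg : Summable g) :
    Summable fun j => g j * recQ q j := by
  obtain ⟨C, -, hC⟩ := exists_recQ_bound (norm_nonneg q) hq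
  refine summable_of_norm_le_mul C hg fun j => ?_
  rw [norm_mul, mul_comm]
  gcongr
  exact hC q le_rfl j

theorem summable_zpow_mul_recQ {x q : ℂ} (hq : ‖q‖ < 1) (hx : ‖x‖ < 1) :
    Summable fun j : ℤ => x ^ j * recQ q j := by
  obtain ⟨C, -, hC⟩ := exists_recQ_bound (norm_nonneg q) hq
  refine Summable.of_nat_of_neg ?_ ?_
  · refine summable_of_norm_le_mul C (g := fun j : ℕ => x ^ j)
      (summable_geometric_of_norm_lt_one hx) fun j => ?_
    rw [zpow_natCast, norm_mul, mul_comm]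
    gcongr
    exact hC q le_rfl j
  · refine summable_of_hasFiniteSupport ((Set.finite_singleton (0 : ℕ)).subset fun j hj => ?_)
    by_contra h
    refine hj ?_
    have : j ≠ 0 := h
    simp only
    rw [recQ_of_neg q (by omega), mul_zero]

theorem summable_zpow_mul_tri_mul_recQ {x q : ℂ} (hx : x ≠ 0) (hq0 : q ≠ 0) (hq : ‖q‖ < 1) :
    Summable fun j : ℤ => x ^ j * (q ^ tri j * recQ q j) := by
  simpa [mul_assoc] using summable_mul_recQ hq (summable_zpow_mul_tri hx hq0 hq)

theorem tsum_shift (f : ℤ → ℂ) (k : ℤ) : ∑' j, f (j + k) = ∑' j, f j :=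
  (Equiv.addRight k).tsum_eq f

theorem tsum_zpow_mul_recQ {x q : ℂ} (hx0 : x ≠ 0) (hq0 : q ≠ 0) (hq : ‖q‖ < 1) (hx : ‖x‖ < 1) :
    qPInf x q * ∑' j : ℤ, x ^ j * recQ q j = 1 := by
  have hs : ∀ n : ℕ, Summable fun j : ℤ => (x * q ^ n) ^ j * recQ q j := fun n =>
    summable_zpow_mul_recQ hq (norm_mul_pow_lt hq hx n)
  have step : ∀ y : ℂ, y ≠ 0 → ‖y‖ < 1 →
      ∑' j : ℤ, (y * q) ^ j * recQ q j = (1 - y) * ∑' j : ℤ, y ^ j * recQ q j := by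
    intro y hy0 hy
    have hy1 := summable_zpow_mul_recQ hq hy
    have hy2 : Summable fun j : ℤ => (y * q) ^ j * recQ q j := by
      refine summable_zpow_mul_recQ hq ?_
      simpa using norm_mul_pow_lt hq hy 1
    have h : ∑' j : ℤ, (y ^ j * recQ q j - (y * q) ^ j * recQ q j)
        = y * ∑' j : ℤ, y ^ j * recQ q j := by
      rw [← tsum_shift _ 1, ← tsum_mul_left]
      refine tsum_congr fun j => ?_
      have h1 := one_sub_zpow_mul_recQ hq (j + 1)
      rw [add_sub_cancel_right] at h1
      rw [← h1, mul_zpow, zpow_add_one₀ hy0]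
      ring
    rw [hy1.tsum_sub hy2] at h
    linear_combination -h
  have iter : ∀ n : ℕ, ∑' j : ℤ, (x * q ^ n) ^ j * recQ q j
      = qP x q n * ∑' j : ℤ, x ^ j * recQ q j := by
    intro n
    induction n with
    | zero => simp [qP]
    | succ n ih =>
      rw [pow_succ, ← mul_assoc, step _ (mul_ne_zero hx0 (pow_ne_zero _ hq0))
        (norm_mul_pow_lt hq hx n), ih, qP, qP, Finset.prod_range_succ]
      ring
  have l1 := tendsto_tsum_zpow_mul (a := recQ q) (fun j => recQ_of_neg q) (by simpa using hs 0)
    (norm_mul_pow_le x hq) (tendsto_mul_pow_zero x hq)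
  simp_rw [iter, recQ_zero] at l1
  exact tendsto_nhds_unique ((tendsto_qP x hq).mul_const _) l1

theorem qPInf_eq_tsum {x q : ℂ} (hx0 : x ≠ 0) (hq0 : q ≠ 0) (hq : ‖q‖ < 1) :
    qPInf x q = ∑' j : ℤ, (-x) ^ j * (q ^ tri j * recQ q j) := by
  have hs : ∀ y : ℂ, y ≠ 0 → Summable fun j : ℤ => (-y) ^ j * (q ^ tri j * recQ q j) :=
    fun y hy => summable_zpow_mul_tri_mul_recQ (neg_ne_zero.mpr hy) hq0 hq
  have step : ∀ y : ℂ, y ≠ 0 →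
      ∑' j : ℤ, (-y) ^ j * (q ^ tri j * recQ q j)
        = (1 - y) * ∑' j : ℤ, (-(y * q)) ^ j * (q ^ tri j * recQ q j) := by
    intro y hy0
    have h : ∑' j : ℤ, ((-y) ^ j * (q ^ tri j * recQ q j)
          - (-(y * q)) ^ j * (q ^ tri j * recQ q j))
        = -y * ∑' j : ℤ, (-(y * q)) ^ j * (q ^ tri j * recQ q j) := by
      rw [← tsum_shift _ 1, ← tsum_mul_left]
      refine tsum_congr fun j => ?_
      have h1 := one_sub_zpow_mul_recQ hq (j + 1)
      rw [add_sub_cancel_right] at h1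
      have hny : -y ≠ 0 := neg_ne_zero.mpr hy0
      rw [← h1, neg_mul_eq_neg_mul, mul_zpow, mul_zpow, zpow_add_one₀ hny, tri_add_one,
        zpow_add₀ hq0 (tri j) j]
      ring
    rw [(hs y hy0).tsum_sub (hs _ (mul_ne_zero hy0 hq0))] at h
    linear_combination h
  have iter : ∀ n : ℕ, ∑' j : ℤ, (-x) ^ j * (q ^ tri j * recQ q j)
      = qP x q n * ∑' j : ℤ, (-(x * q ^ n)) ^ j * (q ^ tri j * recQ q j) := by
    intro n
    induction n with
    | zero => simp [qP]
    | succ n ih =>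
      rw [ih, step _ (mul_ne_zero hx0 (pow_ne_zero n hq0)), qP, qP, Finset.prod_range_succ,
        pow_succ]
      ring_nf
  have l1 := tendsto_tsum_zpow_mul (a := fun j => q ^ tri j * recQ q j)
    (fun j hj => by simp [recQ_of_neg q hj]) (hs x hx0) (y := fun n => -(x * q ^ n))
    (fun n => by simpa using norm_mul_pow_le x hq n) (by simpa using (tendsto_mul_pow_zero x hq).neg)
  have l2 := (tendsto_qP x hq).mul l1
  simp only [← iter, tri_zero, zpow_zero, recQ_zero, mul_one] at l2
  exact tendsto_nhds_unique l2 tendsto_const_nhds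

/-! ### Jacobi's triple product -/

/-- The shear `(m, j) ↦ (m + j, j)` of `ℤ × ℤ`. -/
def shear : ℤ × ℤ ≃ ℤ × ℤ where
  toFun p := (p.1 + p.2, p.2)
  invFun p := (p.1 - p.2, p.2)
  left_inv p := by simp
  right_inv p := by simp

theorem summable_prod_mul {f g : ℤ → ℂ} (hf : Summable f) (hg : Summable g) :
    Summable fun p : ℤ × ℤ => f p.1 * g p.2 :=
  summable_mul_of_summable_norm hf.norm hg.norm

theorem tsum_tsum_eq_mul_of_shear {F : ℤ → ℤ → ℂ} {f g : ℤ → ℂ} (hf : Summable f)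
    (hg : Summable g) (h : ∀ m j, F m j = f (m + j) * g j) :
    ∑' m, ∑' j, F m j = (∑' n, f n) * ∑' j, g j := by
  have hs : Summable fun p : ℤ × ℤ => F p.1 p.2 :=
    (shear.summable_iff.mpr (summable_prod_mul hf hg)).congr fun p => (h p.1 p.2).symm
  rw [← Summable.tsum_comm (f := F) hs, ← tsum_mul_left]
  refine tsum_congr fun j => ?_
  simp_rw [h, tsum_mul_right, tsum_shift f j]

theorem recQ_mul_qPInf_self {q : ℂ} (hq : ‖q‖ < 1) (m : ℤ) :
    recQ q m * qPInf q q = if m < 0 then 0 else qPInf (q * q ^ m) q := by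
  split_ifs with hm
  · rw [recQ_of_neg q hm, zero_mul]
  · obtain ⟨n, rfl⟩ := Int.eq_ofNat_of_zero_le (not_lt.mp hm)
    rw [recQ_natCast, zpow_natCast, qPInf_eq_qP_mul q hq n, inv_mul_cancel_left₀
      (qP_ne_zero hq hq n)]

theorem qPInf_eq_zero {q : ℂ} (hq0 : q ≠ 0) (hq : ‖q‖ < 1) {m : ℤ} (hm : m < 0) :
    qPInf (q * q ^ m) q = 0 := by
  obtain ⟨n, hn⟩ : ∃ n : ℕ, m = -((n + 1 : ℕ) : ℤ) := ⟨(-m).toNat - 1, by omega⟩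
  rw [qPInf_eq_qP_mul _ hq (n + 1), qP, Finset.prod_eq_zero (i := n) (by simp), zero_mul]
  rw [hn, zpow_neg, zpow_natCast, pow_succ]
  field_simp
  simp

theorem jacobi_triple_product {z q : ℂ} (hz : z ≠ 0) (hq0 : q ≠ 0) (hq : ‖q‖ < 1)
    (hzq : ‖q / z‖ < 1) :
    ∑' n : ℤ, (-z) ^ n * q ^ tri n = qPInf z q * qPInf (q / z) q * qPInf q q := by
  have hqz : q / z ≠ 0 := div_ne_zero hq0 hz
  have h1 : qPInf z q * qPInf q q = ∑' m : ℤ, ∑' j : ℤ,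
      ((-z) ^ m * q ^ tri m) * ((-(q * q ^ m)) ^ j * (q ^ tri j * recQ q j)) := by
    rw [qPInf_eq_tsum hz hq0 hq, ← tsum_mul_right]
    refine tsum_congr fun m => ?_
    rw [tsum_mul_left, ← qPInf_eq_tsum (mul_ne_zero hq0 (zpow_ne_zero m hq0)) hq0 hq]
    rw [← mul_assoc, mul_assoc, recQ_mul_qPInf_self hq]
    split_ifs with hm
    · rw [qPInf_eq_zero hq0 hq hm]
    · rfl
  rw [tsum_tsum_eq_mul_of_shear (summable_zpow_mul_tri (neg_ne_zero.mpr hz) hq0 hq)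
    (summable_zpow_mul_recQ hq hzq)] at h1
  · have h2 := tsum_zpow_mul_recQ hqz hq0 hq hzq
    linear_combination (-qPInf (q / z) q) * h1 - (∑' n : ℤ, (-z) ^ n * q ^ tri n) * h2
  · intro m j
    rw [tri_add, zpow_add₀ hq0, zpow_add₀ hq0, zpow_add₀ (neg_ne_zero.mpr hz), neg_eq_neg_one_mul z,
      neg_eq_neg_one_mul (q * q ^ m), mul_zpow, mul_zpow, mul_zpow, mul_zpow, div_zpow, zpow_mul]
    have := zpow_ne_zero j hz
    field_simp

/-! ### The Rogers–Ramanujan identities -/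

theorem eq_zero_of_contracting {E a : ℕ → ℂ} {M : ℝ} (hM : ∀ n, ‖E n‖ ≤ M)
    (hE : ∀ n, E n = a n * E (n + 1)) (ha : Tendsto a atTop (nhds 0)) : E 0 = 0 := by
  have hiter : ∀ N, ∀ n, ‖E (N + n)‖ ≤ 0 → ‖E N‖ ≤ 0 := by
    intro N n
    induction n with
    | zero => exact id
    | succ n ih =>
      intro h
      refine ih ?_
      rw [hE, norm_mul]
      exact mul_nonpos_of_nonneg_of_nonpos (norm_nonneg _) h
  obtain ⟨N, hN⟩ := eventually_atTop.mp
    (ha.norm.eventually_le_const (show ‖(0 : ℂ)‖ < 1 / 2 by norm_num))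
  have hgeo : ∀ n, ‖E N‖ ≤ (1 / 2) ^ n * M := by
    have : ∀ n, ‖E N‖ ≤ (1 / 2) ^ n * ‖E (N + n)‖ := by
      intro n
      induction n with
      | zero => simp
      | succ n ih =>
        refine ih.trans ?_
        rw [hE, norm_mul, pow_succ, mul_assoc, ← add_assoc]
        gcongr
        exact hN _ (by omega)
    exact fun n => (this n).trans (by gcongr; exact hM _)
  have hlim : Tendsto (fun n : ℕ => (1 / 2 : ℝ) ^ n * M) atTop (nhds 0) := by
    simpa using (tendsto_pow_atTop_nhds_zero_of_lt_one (r := (1 / 2 : ℝ)) (by norm_num)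
      (by norm_num)).mul_const M
  have h0 : ‖E (0 + N)‖ ≤ 0 := by
    rw [zero_add]
    exact ge_of_tendsto' hlim hgeo
  exact norm_le_zero_iff.mp (hiter 0 N h0)

theorem summable_gaussian_recQ_recQ {z q : ℂ} (hz : z ≠ 0) (hq0 : q ≠ 0) (hq : ‖q‖ < 1)
    (a b : ℤ) : Summable fun m : ℤ => z ^ m * q ^ (m ^ 2) * (recQ q (m + a) * recQ q (m + b)) := by
  obtain ⟨C, hC0, hC⟩ := exists_recQ_bound (norm_nonneg q) hq
  refine summable_of_norm_le_mul (C * C) (summable_zpow_mul_sq hz hq0 hq) fun m => ?_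
  rw [norm_mul, mul_comm, norm_mul (recQ q _)]
  gcongr
  · exact hC q le_rfl _
  · exact hC q le_rfl _

/-- Cauchy's sum in `zq = q^{j+1}`, up to the factor `(q;q)_j`. -/
noncomputable def cauchySum (q : ℂ) (j : ℤ) : ℂ :=
  ∑' m : ℤ, (q ^ j) ^ m * q ^ (m ^ 2) * (recQ q m * recQ q (m + j))

theorem cauchySum_sub {q : ℂ} (hq0 : q ≠ 0) (hq : ‖q‖ < 1) (j : ℤ) :
    cauchySum q j - cauchySum q (j + 1)
      = -q ^ (j + 1) * (cauchySum q (j + 1) - cauchySum q (j + 2)) := by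
  have hS : ∀ i a b : ℤ, Summable fun m : ℤ =>
      (q ^ i) ^ m * q ^ (m ^ 2) * (recQ q (m + a) * recQ q (m + b)) := fun i =>
    summable_gaussian_recQ_recQ (zpow_ne_zero i hq0) hq0 hq
  have hS0 : ∀ i b : ℤ, Summable fun m : ℤ =>
      (q ^ i) ^ m * q ^ (m ^ 2) * (recQ q m * recQ q (m + b)) := fun i b => by
    simpa using hS i 0 b
  have hpred : ∀ m : ℤ, recQ q (m - 1) = (1 - q ^ m) * recQ q m := fun m =>
    (one_sub_zpow_mul_recQ hq m).symm
  have e1 : cauchySum q j - cauchySum q (j + 1)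
      = (∑' m : ℤ, (q ^ j) ^ m * q ^ (m ^ 2) * (recQ q (m + (-1)) * recQ q (m + (j + 1))))
        - ∑' m : ℤ, q ^ (j + 1) *
            ((q ^ (j + 1)) ^ m * q ^ (m ^ 2) * (recQ q m * recQ q (m + (j + 1)))) := by
    rw [cauchySum, cauchySum, ← (hS0 _ _).tsum_sub (hS0 _ _),
      ← (hS _ _ _).tsum_sub ((hS0 _ _).mul_left _)]
    refine tsum_congr fun m => ?_
    rw [show m + j = m + (j + 1) - 1 by ring, hpred, show m + -1 = m - 1 by ring, hpred,
      zpow_add_one₀ hq0 j, mul_zpow, zpow_add₀ hq0 m, zpow_add_one₀ hq0]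
    ring
  have e2 : (∑' m : ℤ, (q ^ j) ^ m * q ^ (m ^ 2) * (recQ q (m + (-1)) * recQ q (m + (j + 1))))
      = ∑' m : ℤ, q ^ (j + 1) *
          ((q ^ (j + 2)) ^ m * q ^ (m ^ 2) * (recQ q m * recQ q (m + (j + 2)))) := by
    rw [← tsum_shift _ 1]
    refine tsum_congr fun m => ?_
    rw [show m + 1 + -1 = m by ring, show m + 1 + (j + 1) = m + (j + 2) by ring]
    simp only [← mul_assoc, ← zpow_mul, ← zpow_add₀ hq0]
    congr 3
    ring
  rw [e1, e2, tsum_mul_left, tsum_mul_left]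
  have e3 : cauchySum q (j + 1) = ∑' m : ℤ,
      (q ^ (j + 1)) ^ m * q ^ (m ^ 2) * (recQ q m * recQ q (m + (j + 1))) := rfl
  have e4 : cauchySum q (j + 2) = ∑' m : ℤ,
      (q ^ (j + 2)) ^ m * q ^ (m ^ 2) * (recQ q m * recQ q (m + (j + 2))) := rfl
  rw [e3, e4]
  ring

theorem cauchySum_natCast_term_norm_le {q : ℂ} (hq0 : q ≠ 0) (hq : ‖q‖ < 1) :
    ∃ C : ℝ, ∀ (j : ℕ) (m : ℤ), ‖(q ^ (j : ℤ)) ^ m * q ^ (m ^ 2) * (recQ q m * recQ q (m + j))‖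
      ≤ C * ‖(1 : ℂ) ^ m * q ^ (m ^ 2)‖ := by
  obtain ⟨C, hC0, hC⟩ := exists_recQ_bound (norm_nonneg q) hq
  refine ⟨C * C, fun j m => ?_⟩
  rcases lt_or_ge m 0 with hm | hm
  · rw [recQ_of_neg q hm]; simp; positivity
  · obtain ⟨n, rfl⟩ := Int.eq_ofNat_of_zero_le hm
    have h1 : ‖(q ^ (j : ℤ)) ^ (n : ℤ)‖ ≤ 1 := by
      rw [zpow_natCast, zpow_natCast, norm_pow, norm_pow]
      exact pow_le_one₀ (by positivity) (pow_le_one₀ (norm_nonneg _) hq.le)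
    rw [norm_mul, norm_mul, norm_mul (recQ q _), one_zpow, one_mul, mul_comm]
    gcongr
    · exact hC q le_rfl _
    · exact hC q le_rfl _
    · exact mul_le_of_le_one_left (norm_nonneg _) h1

theorem cauchySum_eq {q : ℂ} (hq0 : q ≠ 0) (hq : ‖q‖ < 1) (j : ℤ) :
    cauchySum q j = (qPInf q q)⁻¹ := by
  obtain ⟨C, hC⟩ := cauchySum_natCast_term_norm_le hq0 hq
  have hs := (summable_zpow_mul_sq (one_ne_zero) hq0 hq).norm.mul_left C
  have hlim : Tendsto (fun n : ℕ => cauchySum q n) atTop (nhds (qPInf q q)⁻¹) := by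
    have key : Tendsto (fun n : ℕ => cauchySum q n) atTop
        (nhds (∑' m : ℤ, if m = 0 then (qPInf q q)⁻¹ else 0)) := by
      refine tendsto_tsum_of_dominated_convergence hs (fun m => ?_)
        (Eventually.of_forall fun n m => hC n m)
      rcases lt_trichotomy m 0 with hm | rfl | hm
      · simp [recQ_of_neg q hm, hm.ne]
      · simpa using tendsto_recQ hq
      · obtain ⟨k, rfl⟩ := Int.eq_ofNat_of_zero_le hm.le
        have hk : k ≠ 0 := by rintro rfl; simp at hm
        have h1 : Tendsto (fun n : ℕ => (q ^ (n : ℤ)) ^ (k : ℤ)) atTop (nhds 0) := by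
          simpa [hk] using (tendsto_pow_atTop_nhds_zero_of_norm_lt_one hq).pow k
        have h2 : Tendsto (fun n : ℕ => recQ q ((k : ℤ) + n)) atTop (nhds (qPInf q q)⁻¹) := by
          have := (tendsto_recQ hq).comp (tendsto_add_atTop_nat k)
          refine this.congr fun n => ?_
          simp only [Function.comp]
          congr 1
          push_cast
          ring
        have h3 := (h1.mul_const (q ^ ((k : ℤ) ^ 2))).mul (h2.const_mul (recQ q k))
        simpa [hk] using h3
    simpa using key
  have hstep : ∀ i : ℤ, cauchySum q i = cauchySum q (i + 1) := by
    -- beyond any index, the consecutive differences are contracted to zero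
    have hnat : ∀ n : ℕ, cauchySum q n - cauchySum q (n + 1) = 0 := by
      intro n
      obtain ⟨M, hM⟩ := hlim.norm.bddAbove_range
      have hM' : ∀ n : ℕ, ‖cauchySum q n‖ ≤ M := fun n => hM ⟨n, rfl⟩
      have := eq_zero_of_contracting (M := M + M)
        (E := fun i => cauchySum q ((n + i : ℕ) : ℤ) - cauchySum q (((n + i : ℕ) : ℤ) + 1))
        (a := fun i => -q ^ (((n + i : ℕ) : ℤ) + 1)) (fun i => ?_) (fun i => ?_) ?_
      · simpa using this
      · refine (norm_sub_le _ _).trans (add_le_add (hM' _) ?_)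
        exact_mod_cast hM' (n + i + 1)
      · have := cauchySum_sub hq0 hq ((n + i : ℕ) : ℤ)
        rw [this, show (((n + (i + 1) : ℕ)) : ℤ) = ((n + i : ℕ) : ℤ) + 1 by push_cast; ring,
          add_assoc _ (1 : ℤ) 1]
        rfl
      · have h1 := ((tendsto_pow_atTop_nhds_zero_of_norm_lt_one hq).comp
          (tendsto_add_atTop_nat (n + 1))).neg
        rw [neg_zero] at h1
        refine h1.congr fun i => ?_
        simp only [Function.comp]
        rw [← zpow_natCast]
        congr 2
        push_cast
        ring
    have hdown : ∀ i : ℤ, ∀ k : ℕ, cauchySum q (i + k) - cauchySum q (i + k + 1) = 0 →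
        cauchySum q i - cauchySum q (i + 1) = 0 := by
      intro i k
      induction k with
      | zero => simp
      | succ k ih =>
        intro h
        refine ih ?_
        rw [cauchySum_sub hq0 hq]
        push_cast at h
        rw [← add_assoc] at h
        rw [show i + (k : ℤ) + 2 = i + k + 1 + 1 by ring, h, mul_zero]
    intro i
    refine sub_eq_zero.mp (hdown i i.natAbs ?_)
    obtain ⟨n, hn⟩ := Int.eq_ofNat_of_zero_le (show 0 ≤ i + i.natAbs by omega)
    rw [hn]
    exact hnat n
  have hconst : ∀ k : ℕ, cauchySum q (j + k) = cauchySum q j := by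
    intro k
    induction k with
    | zero => simp
    | succ k ih => rw [← ih, hstep (j + k)]; push_cast; rw [add_assoc]
  refine tendsto_nhds_unique (f := fun n : ℕ => cauchySum q ((n + j.natAbs : ℕ) : ℤ)) (l := atTop)
    ?_ (hlim.comp (tendsto_add_atTop_nat j.natAbs))
  refine tendsto_const_nhds.congr' ?_
  filter_upwards [eventually_ge_atTop j.natAbs] with n hn
  rw [← hconst (n + j.natAbs - j).toNat]
  congr 1
  omega

/-- The limiting case of Bailey's lemma for a pair relative to `q^c`. -/
theorem bailey_limit {q : ℂ} (hq0 : q ≠ 0) (hq : ‖q‖ < 1) (c : ℤ) {w : ℤ → ℂ} (hw : Summable w)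
    {β : ℤ → ℂ} (hβ : ∀ r, β r = ∑' s : ℤ, w s * (recQ q (r - s) * recQ q (r + s + c))) :
    qPInf q q * ∑' r : ℤ, q ^ (r ^ 2 + c * r) * β r = ∑' s : ℤ, w s * q ^ (s ^ 2 + c * s) := by
  obtain ⟨C, hC0, hC⟩ := exists_recQ_bound (norm_nonneg q) hq
  have hg : Summable fun r : ℤ => q ^ (r ^ 2 + c * r) := by
    refine (summable_zpow_mul_sq (zpow_ne_zero c hq0) hq0 hq).congr fun r => ?_
    rw [← zpow_mul, ← zpow_add₀ hq0, add_comm]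
  have hs : Summable (Function.uncurry fun r s : ℤ =>
      q ^ (r ^ 2 + c * r) * (w s * (recQ q (r - s) * recQ q (r + s + c)))) := by
    refine summable_of_norm_le_mul (C * C) (summable_prod_mul hg hw) fun p => ?_
    simp only [Function.uncurry, norm_mul]
    rw [← mul_assoc, mul_comm]
    gcongr
    · exact hC q le_rfl _
    · exact hC q le_rfl _
  have hexp : ∑' r : ℤ, q ^ (r ^ 2 + c * r) * β r = ∑' r : ℤ, ∑' s : ℤ,
      q ^ (r ^ 2 + c * r) * (w s * (recQ q (r - s) * recQ q (r + s + c))) :=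
    tsum_congr fun r => by rw [hβ, tsum_mul_left]
  rw [hexp, ← Summable.tsum_comm hs, ← tsum_mul_left]
  refine tsum_congr fun s => ?_
  rw [← tsum_shift _ s]
  have h1 : ∑' r : ℤ, q ^ ((r + s) ^ 2 + c * (r + s)) *
        (w s * (recQ q (r + s - s) * recQ q (r + s + s + c)))
      = w s * q ^ (s ^ 2 + c * s) * cauchySum q (2 * s + c) := by
    rw [cauchySum, ← tsum_mul_left]
    refine tsum_congr fun r => ?_
    rw [show r + s - s = r by ring, show r + s + s + c = r + (2 * s + c) by ring, ← zpow_mul,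
      show (r + s) ^ 2 + c * (r + s) = (s ^ 2 + c * s) + ((2 * s + c) * r + r ^ 2) by ring,
      zpow_add₀ hq0 (s ^ 2 + c * s), zpow_add₀ hq0 ((2 * s + c) * r)]
    ring
  rw [h1, cauchySum_eq hq0 hq]
  have := qPInf_ne_zero hq hq
  field_simp

/-- The weights `(-1)^s q^{s(3s-1)/2}` of the pentagonal number theorem. -/
noncomputable def pentW (q : ℂ) (s : ℤ) : ℂ := (-1) ^ s * q ^ (s ^ 2 + tri s)

theorem summable_mul_recQ_recQ (q : ℂ) (g : ℤ → ℂ) (a b : ℤ) :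
    Summable fun s : ℤ => g s * (recQ q (a - s) * recQ q (b + s)) := by
  refine summable_of_hasFiniteSupport ((Set.finite_Icc (-b) a).subset fun s hs => ?_)
  by_contra h
  refine hs ?_
  simp only
  rcases lt_or_ge s (-b) with h1 | h1
  · rw [recQ_of_neg q (n := b + s) (by omega)]; simp
  · rw [recQ_of_neg q (n := a - s) (by by_contra h2; exact h ⟨h1, by omega⟩)]; simp

theorem pentW_neg {q : ℂ} (hq0 : q ≠ 0) (s : ℤ) : pentW q (-s) = pentW q s * q ^ s := by
  rw [pentW, pentW, tri_neg, mul_assoc, ← zpow_add₀ hq0, zpow_neg, ← inv_zpow, neg_sq]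
  congr 2
  · norm_num
  · ring

theorem tsum_pentW_eq_tsum {q : ℂ} (hq0 : q ≠ 0) (r : ℤ) :
    ∑' s : ℤ, pentW q s * (recQ q (r - s) * recQ q (r + s))
      = ∑' s : ℤ, pentW q s * q ^ s * (recQ q (r - s) * recQ q (r + s)) := by
  rw [← (Equiv.neg ℤ).tsum_eq]
  refine tsum_congr fun s => ?_
  rw [Equiv.neg_apply, pentW_neg hq0, sub_neg_eq_add, ← sub_eq_add_neg]
  ring

theorem tsum_pentW_antisymm {q : ℂ} (hq0 : q ≠ 0) (r : ℤ) :
    ∑' s : ℤ, pentW q s * q ^ (2 * s) * (recQ q (r - s) * recQ q (r + 1 + s)) = 0 := by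
  have h : ∑' s : ℤ, pentW q s * q ^ (2 * s) * (recQ q (r - s) * recQ q (r + 1 + s))
      = -∑' s : ℤ, pentW q s * q ^ (2 * s) * (recQ q (r - s) * recQ q (r + 1 + s)) := by
    conv_lhs => rw [← (Equiv.subLeft (-1 : ℤ)).tsum_eq]
    rw [← tsum_neg]
    refine tsum_congr fun s => ?_
    have e1 : ((-1 : ℂ)) ^ (-1 - s) = -(-1) ^ s := by
      rw [zpow_sub₀ (by norm_num), div_eq_mul_inv, ← inv_zpow]; norm_num
    have e2 : (-1 - s) ^ 2 + tri (-1 - s) + 2 * (-1 - s) = s ^ 2 + tri s + 2 * s := by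
      have := two_mul_tri s
      have := two_mul_tri (-1 - s)
      linarith
    rw [Equiv.subLeft_apply, pentW, pentW, mul_assoc _ (q ^ _) (q ^ _), ← zpow_add₀ hq0,
      mul_assoc ((-1) ^ s) (q ^ _) (q ^ _), ← zpow_add₀ hq0, e1, e2,
      show r - (-1 - s) = r + 1 + s by ring, show r + 1 + (-1 - s) = r - s by ring]
    ring
  exact self_eq_neg.mp h

theorem tsum_pentW_add_one {q : ℂ} (hq0 : q ≠ 0) (hq : ‖q‖ < 1) (r : ℤ) :
    ∑' s : ℤ, pentW q s * (recQ q (r - s) * recQ q (r + s))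
      = ∑' s : ℤ, pentW q s * q ^ s * (recQ q (r - s) * recQ q (r + 1 + s)) := by
  have hS := summable_mul_recQ_recQ q
  have h : ∑' s : ℤ, pentW q s * q ^ s * (recQ q (r - s) * recQ q (r + s))
      = ∑' s : ℤ, (pentW q s * q ^ s * (recQ q (r - s) * recQ q (r + 1 + s))
        - q ^ (r + 1) * (pentW q s * q ^ (2 * s) * (recQ q (r - s) * recQ q (r + 1 + s)))) := by
    refine tsum_congr fun s => ?_
    have h1 := one_sub_zpow_mul_recQ hq (r + 1 + s)
    rw [show r + 1 + s - 1 = r + s by ring] at h1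
    rw [← h1, zpow_add₀ hq0 (r + 1), two_mul, zpow_add₀ hq0 s s]
    ring
  rw [tsum_pentW_eq_tsum hq0, h, (hS _ _ _).tsum_sub ((hS _ _ _).mul_left _), tsum_mul_left,
    tsum_pentW_antisymm hq0]
  ring

theorem tsum_pentW_succ {q : ℂ} (hq0 : q ≠ 0) (hq : ‖q‖ < 1) (r : ℤ) :
    ∑' s : ℤ, pentW q s * q ^ s * (recQ q (r - s) * recQ q (r + 1 + s))
      = (1 - q ^ (r + 1)) *
        ∑' s : ℤ, pentW q s * (recQ q (r + 1 - s) * recQ q (r + 1 + s)) := by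
  have hS := summable_mul_recQ_recQ q
  have h : ∑' s : ℤ, pentW q s * q ^ s * (recQ q (r - s) * recQ q (r + 1 + s))
      = ∑' s : ℤ, (pentW q s * q ^ s * (recQ q (r + 1 - s) * recQ q (r + 1 + s))
        - q ^ (r + 1) * (pentW q s * (recQ q (r + 1 - s) * recQ q (r + 1 + s)))) := by
    refine tsum_congr fun s => ?_
    have h1 := one_sub_zpow_mul_recQ hq (r + 1 - s)
    rw [show r + 1 - s - 1 = r - s by ring] at h1
    have := zpow_ne_zero s hq0
    rw [← h1, zpow_sub₀ hq0 (r + 1)]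
    field_simp
  rw [h, (hS _ _ _).tsum_sub ((hS _ _ _).mul_left _), tsum_mul_left,
    ← tsum_pentW_eq_tsum hq0]
  ring

theorem recQ_eq_tsum_pentW {q : ℂ} (hq0 : q ≠ 0) (hq : ‖q‖ < 1) (r : ℤ) :
    recQ q r = ∑' s : ℤ, pentW q s * (recQ q (r - s) * recQ q (r + s)) := by
  rcases lt_or_ge r 0 with hr | hr
  · rw [recQ_of_neg q hr, eq_comm]
    refine (tsum_congr fun s => ?_).trans tsum_zero
    rcases lt_or_ge s 0 with hs | hs
    · rw [recQ_of_neg q (n := r + s) (by omega)]; simp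
    · rw [recQ_of_neg q (n := r - s) (by omega)]; simp
  obtain ⟨n, rfl⟩ := Int.eq_ofNat_of_zero_le hr
  induction n with
  | zero =>
    rw [tsum_eq_single 0]
    · simp [pentW]
    · intro s hs
      rcases lt_or_gt_of_ne hs with h | h
      · rw [recQ_of_neg q (n := ((0 : ℕ) : ℤ) + s) (by simpa using h)]; simp
      · rw [recQ_of_neg q (n := ((0 : ℕ) : ℤ) - s) (by simpa using h)]; simp
  | succ n ih =>
    have h1 := tsum_pentW_succ hq0 hq n
    rw [← tsum_pentW_add_one hq0 hq, ← ih (by positivity)] at h1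
    have h2 := one_sub_zpow_mul_recQ hq ((n : ℤ) + 1)
    rw [add_sub_cancel_right, h1] at h2
    have h3 : 1 - q ^ ((n : ℤ) + 1) ≠ 0 := by
      rw [← Nat.cast_succ, zpow_natCast]
      exact one_sub_ne_zero_of_norm_lt (norm_sq_lt_one hq (Nat.succ_ne_zero n))
    push_cast
    exact mul_left_cancel₀ h3 h2

/-- The first Rogers–Ramanujan function. -/
noncomputable def rrG (q : ℂ) : ℂ := ∑' n : ℤ, q ^ (n ^ 2) * recQ q n

/-- The second Rogers–Ramanujan function. -/
noncomputable def rrH (q : ℂ) : ℂ := ∑' n : ℤ, q ^ (n ^ 2 + n) * recQ q n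

theorem summable_pentW {q : ℂ} (hq0 : q ≠ 0) (hq : ‖q‖ < 1) : Summable (pentW q) := by
  refine (summable_zpow_mul_tri (z := -q) (q := q ^ 3) (neg_ne_zero.mpr hq0)
    (pow_ne_zero 3 hq0) (norm_sq_lt_one hq three_ne_zero)).congr fun s => ?_
  rw [pentW, neg_eq_neg_one_mul q, mul_zpow, mul_assoc, ← zpow_natCast q 3, ← zpow_mul,
    ← zpow_add₀ hq0]
  congr 2
  have := two_mul_tri s
  push_cast
  linarith

theorem rrG_product {q : ℂ} (hq0 : q ≠ 0) (hq : ‖q‖ < 1) :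
    qPInf q q * rrG q
      = qPInf (q ^ 2) (q ^ 5) * qPInf (q ^ 3) (q ^ 5) * qPInf (q ^ 5) (q ^ 5) := by
  have h := bailey_limit hq0 hq 0 (summable_pentW hq0 hq) (β := recQ q)
    (fun r => by simpa using recQ_eq_tsum_pentW hq0 hq r)
  have e : q ^ 5 / q ^ 2 = q ^ 3 := by field_simp
  have hj := jacobi_triple_product (z := q ^ 2) (q := q ^ 5) (pow_ne_zero 2 hq0)
    (pow_ne_zero 5 hq0) (norm_sq_lt_one hq (by norm_num))
    (by rw [e]; exact norm_sq_lt_one hq (by norm_num))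
  rw [e] at hj
  simp only [zero_mul, add_zero] at h
  rw [rrG, h, ← hj]
  refine tsum_congr fun s => ?_
  rw [pentW, neg_eq_neg_one_mul (q ^ 2), mul_zpow, mul_assoc, mul_assoc, ← zpow_natCast q 2,
    ← zpow_natCast q 5, ← zpow_mul, ← zpow_mul, ← zpow_add₀ hq0, ← zpow_add₀ hq0]
  congr 2
  have := two_mul_tri s
  push_cast
  linarith

theorem rrH_product {q : ℂ} (hq0 : q ≠ 0) (hq : ‖q‖ < 1) :
    qPInf q q * rrH q
      = qPInf q (q ^ 5) * qPInf (q ^ 4) (q ^ 5) * qPInf (q ^ 5) (q ^ 5) := by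
  have hw : Summable fun s => pentW q s * q ^ s :=
    ((Equiv.neg ℤ).summable_iff.mpr (summable_pentW hq0 hq)).congr fun s => by
      simp [pentW_neg hq0]
  have h := bailey_limit hq0 hq 1 hw (β := recQ q)
    (fun r => by
      rw [recQ_eq_tsum_pentW hq0 hq r, tsum_pentW_add_one hq0 hq]
      simp only [add_right_comm r 1])
  have e : q ^ 5 / q ^ 4 = q := by field_simp
  have hj := jacobi_triple_product (z := q ^ 4) (q := q ^ 5) (pow_ne_zero 4 hq0)
    (pow_ne_zero 5 hq0) (norm_sq_lt_one hq (by norm_num)) (by rwa [e])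
  rw [e, mul_comm (qPInf (q ^ 4) _)] at hj
  simp only [one_mul] at h
  rw [rrH, h, ← hj]
  refine tsum_congr fun s => ?_
  rw [pentW, neg_eq_neg_one_mul (q ^ 4), mul_zpow, mul_assoc, mul_assoc, mul_assoc,
    ← zpow_natCast q 4, ← zpow_natCast q 5, ← zpow_mul, ← zpow_mul, ← zpow_add₀ hq0,
    ← zpow_add₀ hq0, ← zpow_add₀ hq0]
  congr 2
  have := two_mul_tri s
  push_cast
  linarith

/-! ### Rogers–Szegő polynomials -/

/-- The homogeneous Rogers–Szegő polynomial, divided by `(q;q)_N`. -/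
noncomputable def rogersSzego (q a b : ℂ) (N : ℤ) : ℂ :=
  ∑' m : ℤ, a ^ (N - m) * b ^ m * (recQ q (N - m) * recQ q m)

theorem summable_rogersSzego (q : ℂ) (g : ℤ → ℂ) (N : ℤ) :
    Summable fun m : ℤ => g m * (recQ q (N - m) * recQ q m) := by
  simpa using summable_mul_recQ_recQ q g N 0

theorem rogersSzego_of_neg (q a b : ℂ) {N : ℤ} (hN : N < 0) : rogersSzego q a b N = 0 := by
  refine (tsum_congr fun m => ?_).trans tsum_zero
  rcases lt_or_ge m 0 with h | h
  · simp [recQ_of_neg q h]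
  · simp [recQ_of_neg q (show N - m < 0 by omega)]

theorem rogersSzego_zero (q a b : ℂ) : rogersSzego q a b 0 = 1 := by
  rw [rogersSzego, tsum_eq_single 0]
  · simp
  · intro m hm
    rcases lt_or_gt_of_ne hm with h | h
    · simp [recQ_of_neg q h]
    · rw [recQ_of_neg q (show 0 - m < 0 by omega)]; simp

theorem rogersSzego_rec {q a b : ℂ} (hq0 : q ≠ 0) (hq : ‖q‖ < 1) (ha : a ≠ 0) (hb : b ≠ 0)
    (N : ℤ) :
    (1 - q ^ N) * rogersSzego q a b N
      = (a + b) * rogersSzego q a b (N - 1) - a * b * rogersSzego q a b (N - 2) := by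
  have hS := summable_rogersSzego q
  have h1 : ∑' m : ℤ, a ^ (N - m) * b ^ m * (recQ q (N - 1 - m) * recQ q m)
      = a * rogersSzego q a b (N - 1) := by
    rw [rogersSzego, ← tsum_mul_left]
    refine tsum_congr fun m => ?_
    rw [show N - m = (N - 1 - m) + 1 by ring, zpow_add_one₀ ha]
    ring
  have h2 : ∑' m : ℤ, a ^ (N - m) * b ^ m * q ^ (N - m) * (recQ q (N - m) * recQ q (m - 1))
      = b * rogersSzego q a b (N - 1) - a * b * rogersSzego q a b (N - 2) := by
    rw [rogersSzego, rogersSzego, ← tsum_mul_left, ← tsum_mul_left,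
      ← ((hS _ _).mul_left _).tsum_sub (((hS _ _).congr fun m => rfl).mul_left _),
      ← tsum_shift _ 1]
    refine tsum_congr fun m => ?_
    have h := one_sub_zpow_mul_recQ hq (N - (m + 1))
    rw [show N - 1 - m = N - (m + 1) by ring, show N - 2 - m = N - (m + 1) - 1 by ring, ← h,
      add_sub_cancel_right, zpow_add_one₀ hb, zpow_sub_one₀ ha]
    field_simp
    ring
  rw [add_mul, add_sub_assoc, ← h1, ← h2, rogersSzego, ← tsum_mul_left, ← (hS _ _).tsum_add]
  · refine tsum_congr fun m => ?_
    have e1 := one_sub_zpow_mul_recQ hq m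
    have e2 := one_sub_zpow_mul_recQ hq (N - m)
    rw [← e1, show N - 1 - m = N - m - 1 by ring, ← e2]
    have : q ^ N = q ^ (N - m) * q ^ m := by rw [← zpow_add₀ hq0]; congr 1; ring
    rw [this]
    ring
  · refine (hS (fun m => a ^ (N - m) * b ^ m * q ^ (N - m) * (1 - q ^ m)) N).congr fun m => ?_
    rw [← one_sub_zpow_mul_recQ hq m]
    ring

theorem sq_zpow (q : ℂ) (n : ℤ) : (q ^ 2) ^ n = q ^ (2 * n) := by
  rw [zpow_mul]; norm_cast

theorem one_sub_zpow_ne_zero {q : ℂ} (hq : ‖q‖ < 1) {n : ℤ} (hn : 0 < n) : 1 - q ^ n ≠ 0 := by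
  obtain ⟨m, rfl⟩ := Int.eq_ofNat_of_zero_le hn.le
  rw [zpow_natCast]
  exact one_sub_ne_zero_of_norm_lt (norm_sq_lt_one hq (by omega))

theorem rogersSzego_eq_recQ {p a b c : ℂ} (hp0 : p ≠ 0) (hp : ‖p‖ < 1) (hc : c ≠ 0)
    (hadd : a + b = c * (1 + p)) (hmul : a * b = c ^ 2 * p) (N : ℤ) :
    rogersSzego (p ^ 2) a b N = c ^ N * recQ p N := by
  have hab : a * b ≠ 0 := by rw [hmul]; exact mul_ne_zero (pow_ne_zero 2 hc) hp0
  rcases lt_or_ge N 0 with hN | hN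
  · rw [rogersSzego_of_neg _ _ _ hN, recQ_of_neg _ hN, mul_zero]
  obtain ⟨n, rfl⟩ := Int.eq_ofNat_of_zero_le hN
  clear hN
  suffices ∀ n : ℕ, rogersSzego (p ^ 2) a b n = c ^ (n : ℤ) * recQ p n ∧
      rogersSzego (p ^ 2) a b (n - 1) = c ^ ((n : ℤ) - 1) * recQ p (n - 1) from (this n).1
  intro n
  induction n with
  | zero =>
    refine ⟨by simp [rogersSzego_zero], ?_⟩
    rw [rogersSzego_of_neg _ _ _ (by simp), recQ_of_neg _ (by simp), mul_zero]
  | succ n ih =>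
    have h := rogersSzego_rec (pow_ne_zero 2 hp0) (norm_sq_lt_one hp two_ne_zero)
      (left_ne_zero_of_mul hab) (right_ne_zero_of_mul hab) ((n : ℤ) + 1)
    push_cast
    rw [add_sub_cancel_right] at h ⊢
    refine ⟨mul_left_cancel₀ (one_sub_zpow_ne_zero (norm_sq_lt_one hp two_ne_zero)
      (show 0 < (n : ℤ) + 1 by positivity)) ?_, ih.1⟩
    have e1 := one_sub_zpow_mul_recQ hp (n : ℤ)
    have e2 := one_sub_zpow_mul_recQ hp ((n : ℤ) + 1)
    rw [add_sub_cancel_right] at e2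
    rw [h, show (n : ℤ) + 1 - 2 = n - 1 by ring, ih.1, ih.2, hadd, hmul, ← e1, ← e2,
      zpow_sub_one₀ hc, zpow_add_one₀ hc, sq_zpow, mul_comm 2, zpow_mul, zpow_add_one₀ hp0]
    field_simp
    norm_cast
    ring

theorem rogersSzego_neg_odd {q c : ℂ} (hq0 : q ≠ 0) (hq : ‖q‖ < 1) (hc : c ≠ 0) (n : ℤ) :
    rogersSzego q c (-c) (2 * n + 1) = 0 := by
  rcases lt_or_ge n 0 with hn | hn
  · exact rogersSzego_of_neg _ _ _ (by omega)
  obtain ⟨n, rfl⟩ := Int.eq_ofNat_of_zero_le hn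
  have key : ∀ m : ℤ, rogersSzego q c (-c) (2 * m - 1) = 0 → 0 ≤ m →
      rogersSzego q c (-c) (2 * m + 1) = 0 := by
    intro m h0 hm
    have h := rogersSzego_rec hq0 hq hc (neg_ne_zero.mpr hc) (2 * m + 1)
    rw [show 2 * m + 1 - 2 = 2 * m - 1 by ring, h0] at h
    refine mul_left_cancel₀ (one_sub_zpow_ne_zero hq (show 0 < 2 * m + 1 by omega)) ?_
    rw [h]; ring
  induction n with
  | zero => exact key _ (rogersSzego_of_neg _ _ _ (by simp)) (by simp)
  | succ n ih =>
    refine key _ ?_ (by positivity)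
    rw [← ih (by positivity)]
    push_cast
    congr 1
    ring

theorem rogersSzego_neg_even {q c : ℂ} (hq0 : q ≠ 0) (hq : ‖q‖ < 1) (hc : c ≠ 0) (n : ℤ) :
    rogersSzego q c (-c) (2 * n) = c ^ (2 * n) * recQ (q ^ 2) n := by
  rcases lt_or_ge n 0 with hn | hn
  · rw [rogersSzego_of_neg _ _ _ (by omega), recQ_of_neg _ hn, mul_zero]
  obtain ⟨n, rfl⟩ := Int.eq_ofNat_of_zero_le hn
  induction n with
  | zero => simp [rogersSzego_zero]
  | succ n ih =>
    have h := rogersSzego_rec hq0 hq hc (neg_ne_zero.mpr hc) (2 * ((n : ℤ) + 1))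
    have e := one_sub_zpow_mul_recQ (norm_sq_lt_one hq two_ne_zero) ((n : ℤ) + 1)
    push_cast
    refine mul_left_cancel₀ (one_sub_zpow_ne_zero hq
      (show 0 < 2 * ((n : ℤ) + 1) by positivity)) ?_
    rw [add_sub_cancel_right, sq_zpow] at e
    rw [h, show 2 * ((n : ℤ) + 1) - 2 = 2 * n by ring, ih (by positivity), ← e, mul_add,
      zpow_add₀ hc]
    simp
    ring_nf

theorem tsum_mul_qPInf_eq_rogersSzego {q a b : ℂ} (hq0 : q ≠ 0) (hq : ‖q‖ < 1) (ha : a ≠ 0)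
    (hb : b ≠ 0) :
    ∑' n : ℤ, a ^ n * q ^ (n ^ 2) * (recQ (q ^ 2) n * qPInf (-(b * q ^ (2 * n + 1))) (q ^ 2))
      = ∑' N : ℤ, q ^ (N ^ 2) * rogersSzego (q ^ 2) a b N := by
  have h2 : ‖q ^ 2‖ < 1 := norm_sq_lt_one hq two_ne_zero
  have hexp : ∀ n : ℤ, a ^ n * q ^ (n ^ 2) *
        (recQ (q ^ 2) n * qPInf (-(b * q ^ (2 * n + 1))) (q ^ 2))
      = ∑' m : ℤ, q ^ ((n + m) ^ 2) * (a ^ n * b ^ m * (recQ (q ^ 2) n * recQ (q ^ 2) m)) := by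
    intro n
    rw [qPInf_eq_tsum (neg_ne_zero.mpr (mul_ne_zero hb (zpow_ne_zero _ hq0)))
      (pow_ne_zero 2 hq0) h2, ← tsum_mul_left, ← tsum_mul_left]
    refine tsum_congr fun m => ?_
    have := two_mul_tri m
    rw [neg_neg, mul_zpow, ← zpow_natCast q 2, ← zpow_mul q _ (tri m), ← zpow_mul,
      show (n + m) ^ 2 = n ^ 2 + ((2 * n + 1) * m + ((2 : ℕ) : ℤ) * tri m) by
        push_cast; linarith, zpow_add₀ hq0 (n ^ 2), zpow_add₀ hq0 (_ * m)]
    ring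
  simp_rw [hexp]
  have hs : Summable fun p : ℤ × ℤ => q ^ ((p.1 + p.2) ^ 2) *
      (a ^ p.1 * b ^ p.2 * (recQ (q ^ 2) p.1 * recQ (q ^ 2) p.2)) := by
    obtain ⟨C, hC0, hC⟩ := exists_recQ_bound (norm_nonneg (q ^ 2)) h2
    refine summable_of_norm_le_mul (C * C) (summable_prod_mul
      (summable_zpow_mul_sq ha hq0 hq) (summable_zpow_mul_sq hb hq0 hq)) ?_
    rintro ⟨n, m⟩
    rcases lt_or_ge n 0 with hn | hn
    · simp only [recQ_of_neg _ hn, zero_mul, mul_zero, norm_zero]; positivity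
    rcases lt_or_ge m 0 with hm | hm
    · simp only [recQ_of_neg _ hm, mul_zero, norm_zero]; positivity
    have h3 : ‖q ^ ((n + m) ^ 2)‖ ≤ ‖q ^ (n ^ 2)‖ * ‖q ^ (m ^ 2)‖ := by
      rw [← norm_mul, ← zpow_add₀ hq0, norm_zpow, norm_zpow]
      exact zpow_le_zpow_right_of_le_one₀ (norm_pos_iff.mpr hq0) hq.le (by nlinarith)
    calc _ ≤ (‖q ^ (n ^ 2)‖ * ‖q ^ (m ^ 2)‖) * (‖a ^ n‖ * ‖b ^ m‖ * (C * C)) := by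
          rw [norm_mul, norm_mul, norm_mul, norm_mul]
          gcongr
          · exact hC _ le_rfl _
          · exact hC _ le_rfl _
      _ = _ := by simp only [norm_mul]; ring
  have hs' : Summable fun p : ℤ × ℤ => q ^ (p.1 ^ 2) *
      (a ^ (p.1 - p.2) * b ^ p.2 * (recQ (q ^ 2) (p.1 - p.2) * recQ (q ^ 2) p.2)) :=
    (shear.symm.summable_iff.mpr hs).congr fun p => by simp [shear]
  simp_rw [rogersSzego, ← tsum_mul_left]
  rw [← hs.tsum_prod, ← hs'.tsum_prod, ← shear.symm.tsum_eq]
  exact tsum_congr fun p => by simp [shear]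

/-! ### Even and odd parts of bilateral sums -/

theorem isCompl_range_even_odd :
    IsCompl (Set.range fun n : ℤ => 2 * n) (Set.range fun n : ℤ => 2 * n + 1) := by
  have h1 : (Set.range fun n : ℤ => 2 * n) = {n | Even n} := by
    ext n; simp only [Set.mem_range, Set.mem_ofPred_eq, even_iff_exists_two_mul, eq_comm]
  have h2 : (Set.range fun n : ℤ => 2 * n + 1) = {n | Odd n} := by
    ext n; simp only [Set.mem_range, Set.mem_ofPred_eq, Odd, eq_comm]
  rw [h1, h2]
  exact Int.isCompl_even_odd

theorem injective_two_mul : Function.Injective fun n : ℤ => 2 * n := fun a b h => by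
  simpa using h

theorem injective_two_mul_add_one : Function.Injective fun n : ℤ => 2 * n + 1 := fun a b h => by
  simpa using h

theorem tsum_even_add_odd {f : ℤ → ℂ} (hf : Summable f) :
    ∑' n, f n = ∑' n : ℤ, f (2 * n) + ∑' n : ℤ, f (2 * n + 1) := by
  have h1 := (hf.comp_injective injective_two_mul).hasSum
  have h2 := (hf.comp_injective injective_two_mul_add_one).hasSum
  exact (HasSum.add_isCompl isCompl_range_even_odd (injective_two_mul.hasSum_range_iff.mpr h1)
    (injective_two_mul_add_one.hasSum_range_iff.mpr h2)).tsum_eq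

theorem tsum_eq_tsum_even {f : ℤ → ℂ} (hf : ∀ n, f (2 * n + 1) = 0) :
    ∑' n, f n = ∑' n : ℤ, f (2 * n) := by
  refine (injective_two_mul.tsum_eq fun n hn => ?_).symm
  rcases Int.even_or_odd' n with ⟨k, rfl | rfl⟩
  · exact ⟨k, rfl⟩
  · exact absurd (hf k) hn

/-! ### Dissections of the Rogers–Ramanujan functions -/

theorem qP_two_mul (q : ℂ) (n : ℕ) :
    qP q q (2 * n) = qP q (q ^ 2) n * qP (q ^ 2) (q ^ 2) n := by
  induction n with
  | zero => simp [qP]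
  | succ n ih =>
    rw [show 2 * (n + 1) = 2 * n + 1 + 1 by ring, qP, Finset.prod_range_succ,
      Finset.prod_range_succ, ← qP, ih, qP, qP, qP, qP, Finset.prod_range_succ,
      Finset.prod_range_succ]
    ring

theorem qPInf_mul_recQ_even {q : ℂ} (hq : ‖q‖ < 1) (n : ℤ) :
    qPInf q (q ^ 2) * recQ q (2 * n) = recQ (q ^ 2) n * qPInf (q ^ (2 * n + 1)) (q ^ 2) := by
  rcases lt_or_ge n 0 with hn | hn
  · rw [recQ_of_neg _ hn, recQ_of_neg _ (by omega)]; ring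
  obtain ⟨n, rfl⟩ := Int.eq_ofNat_of_zero_le hn
  have h2 : ‖q ^ 2‖ < 1 := norm_sq_lt_one hq two_ne_zero
  have e : recQ q (2 * (n : ℤ)) = (qP q q (2 * n))⁻¹ := by rw [← recQ_natCast]; norm_cast
  have e' : q * (q ^ 2) ^ n = q ^ (2 * (n : ℤ) + 1) := by norm_cast; ring
  rw [e, recQ_natCast, qPInf_eq_qP_mul q h2 n, qP_two_mul, e']
  have := qP_ne_zero h2 hq n
  have := qP_ne_zero h2 h2 n
  field_simp

theorem qPInf_mul_recQ_odd {q : ℂ} (hq : ‖q‖ < 1) (n : ℤ) :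
    qPInf q (q ^ 2) * recQ q (2 * n + 1)
      = recQ (q ^ 2) n * qPInf (q ^ 2 * q ^ (2 * n + 1)) (q ^ 2) := by
  rcases lt_or_ge n 0 with hn | hn
  · rw [recQ_of_neg _ hn, recQ_of_neg _ (by omega)]; ring
  have h2 : ‖q ^ 2‖ < 1 := norm_sq_lt_one hq two_ne_zero
  have h := qPInf_mul_recQ_even hq n
  have e := one_sub_zpow_mul_recQ hq (2 * n + 1)
  rw [add_sub_cancel_right] at e
  refine mul_left_cancel₀ (one_sub_zpow_ne_zero hq (show 0 < 2 * n + 1 by omega)) ?_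
  rw [qPInf_eq_mul (q ^ (2 * n + 1)) h2, ← e, mul_comm (q ^ (2 * n + 1)) (q ^ 2)] at h
  linear_combination h

theorem qPInf_mul_recQ_sq {q : ℂ} (hq : ‖q‖ < 1) (n : ℤ) :
    qPInf (-q) q * recQ (q ^ 2) n = recQ q n * qPInf (-(q * q ^ n)) q := by
  rcases lt_or_ge n 0 with hn | hn
  · rw [recQ_of_neg _ hn, recQ_of_neg _ hn]; ring
  obtain ⟨n, rfl⟩ := Int.eq_ofNat_of_zero_le hn
  have e : qP (q ^ 2) (q ^ 2) n = qP q q n * qP (-q) q n := by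
    rw [qP, qP, qP, ← Finset.prod_mul_distrib]
    exact Finset.prod_congr rfl fun i _ => by ring
  rw [recQ_natCast, recQ_natCast, qPInf_eq_qP_mul (-q) hq n, e, zpow_natCast, neg_mul]
  have := qP_ne_zero hq hq n
  have := qP_ne_zero (a := -q) hq (by rwa [norm_neg]) n
  field_simp

theorem tsum_sq_add_recQ_even {q : ℂ} (hq0 : q ≠ 0) (hq : ‖q‖ < 1) :
    qPInf q (q ^ 2) * ∑' n : ℤ, q ^ (n ^ 2 + n) * recQ q (2 * n) = rrG (-q) := by
  have h := tsum_mul_qPInf_eq_rogersSzego hq0 hq hq0 (neg_ne_zero.mpr one_ne_zero)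
  rw [← tsum_mul_left]
  convert h using 1
  · refine tsum_congr fun n => ?_
    rw [neg_one_mul, neg_neg, ← qPInf_mul_recQ_even hq, zpow_add₀ hq0]
    ring
  · refine tsum_congr fun n => ?_
    have e := rogersSzego_eq_recQ (p := -q) (a := q) (b := -1) (c := -1) (neg_ne_zero.mpr hq0)
      (by rwa [norm_neg]) (by norm_num) (by ring) (by ring) n
    rw [neg_sq] at e
    rw [e, neg_eq_neg_one_mul q, mul_zpow, ← mul_assoc, mul_comm (q ^ _)]
    congr 2
    rcases Int.even_or_odd n with hn | hn
    · rw [hn.neg_one_zpow, (hn.pow_of_ne_zero two_ne_zero).neg_one_zpow]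
    · rw [hn.neg_one_zpow, hn.pow.neg_one_zpow]

theorem tsum_add_one_sq_recQ_odd {q : ℂ} (hq0 : q ≠ 0) (hq : ‖q‖ < 1) :
    qPInf q (q ^ 2) * ∑' n : ℤ, q ^ ((n + 1) ^ 2) * recQ q (2 * n + 1) = q * rrH (q ^ 4) := by
  have hq2 := pow_ne_zero 2 hq0
  have h := tsum_mul_qPInf_eq_rogersSzego hq0 hq hq2 (neg_ne_zero.mpr hq2)
  rw [tsum_eq_tsum_even (f := fun N : ℤ => q ^ (N ^ 2) * rogersSzego (q ^ 2) (q ^ 2) (-q ^ 2) N)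
    (fun n => by rw [rogersSzego_neg_odd hq2 (norm_sq_lt_one hq two_ne_zero) hq2, mul_zero])] at h
  rw [rrH, ← tsum_mul_left, ← tsum_mul_left]
  have h' := congrArg (q * ·) h
  simp only [← tsum_mul_left] at h'
  convert h' using 1
  · refine tsum_congr fun n => ?_
    rw [neg_mul, neg_neg, ← qPInf_mul_recQ_odd hq, sq_zpow,
      show (n + 1) ^ 2 = 2 * n + n ^ 2 + 1 by ring, zpow_add_one₀ hq0, zpow_add₀ hq0]
    ring
  · refine tsum_congr fun n => ?_
    rw [rogersSzego_neg_even hq2 (norm_sq_lt_one hq two_ne_zero) hq2, ← pow_mul, sq_zpow,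
      ← mul_assoc (q ^ (_ ^ 2)), ← zpow_add₀ hq0, ← zpow_natCast q 4, ← zpow_mul]
    congr 3
    push_cast; ring

theorem tsum_sq_recQ_even {q : ℂ} (hq0 : q ≠ 0) (hq : ‖q‖ < 1) :
    qPInf q (q ^ 2) * ∑' n : ℤ, q ^ (n ^ 2) * recQ q (2 * n) = rrG (q ^ 4) := by
  have h := tsum_mul_qPInf_eq_rogersSzego hq0 hq one_ne_zero (neg_ne_zero.mpr one_ne_zero)
  rw [tsum_eq_tsum_even (f := fun N : ℤ => q ^ (N ^ 2) * rogersSzego (q ^ 2) 1 (-1) N)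
    (fun n => by rw [rogersSzego_neg_odd (pow_ne_zero 2 hq0) (norm_sq_lt_one hq two_ne_zero)
      one_ne_zero, mul_zero])] at h
  rw [rrG, ← tsum_mul_left]
  convert h using 1
  · refine tsum_congr fun n => ?_
    rw [neg_one_mul, neg_neg, ← qPInf_mul_recQ_even hq, one_zpow]
    ring
  · refine tsum_congr fun n => ?_
    rw [rogersSzego_neg_even (pow_ne_zero 2 hq0) (norm_sq_lt_one hq two_ne_zero) one_ne_zero,
      one_zpow, one_mul, ← pow_mul, ← zpow_natCast q 4, ← zpow_mul]
    congr 2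
    push_cast; ring

theorem tsum_sq_add_recQ_odd {q : ℂ} (hq0 : q ≠ 0) (hq : ‖q‖ < 1) :
    qPInf q (q ^ 2) * ∑' n : ℤ, q ^ (n ^ 2 + n) * recQ q (2 * n + 1) = rrH (-q) := by
  have h := tsum_mul_qPInf_eq_rogersSzego hq0 hq hq0 (neg_ne_zero.mpr (pow_ne_zero 2 hq0))
  rw [← tsum_mul_left]
  convert h using 1
  · refine tsum_congr fun n => ?_
    rw [neg_mul, neg_neg, ← qPInf_mul_recQ_odd hq, zpow_add₀ hq0]
    ring
  · refine tsum_congr fun n => ?_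
    have e := rogersSzego_eq_recQ (p := -q) (a := q) (b := -q ^ 2) (c := q) (neg_ne_zero.mpr hq0)
      (by rwa [norm_neg]) hq0 (by ring) (by ring) n
    rw [neg_sq] at e
    have he : Even (n ^ 2 + n) := by
      rw [sq, ← mul_add_one]; exact Int.even_mul_succ_self n
    rw [e, he.neg_zpow, zpow_add₀ hq0, mul_assoc]

theorem tsum_sq_recQ_pow_four {q : ℂ} (hq0 : q ≠ 0) (hq : ‖q‖ < 1) :
    qPInf (-q ^ 2) (q ^ 2) * ∑' n : ℤ, q ^ (n ^ 2) * recQ (q ^ 4) n = rrG q := by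
  have h2 := norm_sq_lt_one hq two_ne_zero
  have h := tsum_mul_qPInf_eq_rogersSzego hq0 hq one_ne_zero hq0
  rw [← tsum_mul_left]
  convert h using 1
  · refine tsum_congr fun n => ?_
    have e := qPInf_mul_recQ_sq h2 n
    rw [← pow_mul, sq_zpow] at e
    rw [show q * q ^ (2 * n + 1) = q ^ 2 * q ^ (2 * n) by rw [zpow_add_one₀ hq0]; ring, ← e,
      one_zpow]
    ring
  · refine tsum_congr fun n => ?_
    rw [rogersSzego_eq_recQ hq0 hq one_ne_zero (by ring) (by ring), one_zpow, one_mul]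

theorem tsum_sq_add_two_mul_recQ_pow_four {q : ℂ} (hq0 : q ≠ 0) (hq : ‖q‖ < 1) :
    qPInf (-q ^ 2) (q ^ 2) * ∑' n : ℤ, q ^ (n ^ 2 + 2 * n) * recQ (q ^ 4) n = rrH q := by
  have h2 := norm_sq_lt_one hq two_ne_zero
  have h := tsum_mul_qPInf_eq_rogersSzego hq0 hq (pow_ne_zero 2 hq0) hq0
  rw [← tsum_mul_left]
  convert h using 1
  · refine tsum_congr fun n => ?_
    have e := qPInf_mul_recQ_sq h2 n
    rw [← pow_mul, sq_zpow] at e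
    rw [show q * q ^ (2 * n + 1) = q ^ 2 * q ^ (2 * n) by rw [zpow_add_one₀ hq0]; ring, ← e,
      zpow_add₀ hq0, sq_zpow]
    ring
  · refine tsum_congr fun n => ?_
    rw [rogersSzego_eq_recQ (c := q) hq0 hq hq0 (by ring) (by ring), zpow_add₀ hq0, mul_assoc]

/-- The theta series `∑ q^{n²}`. -/
noncomputable def theta3 (q : ℂ) : ℂ := ∑' n : ℤ, q ^ (n ^ 2)

/-- The theta series `∑ q^{n²+n}`. -/
noncomputable def theta2 (q : ℂ) : ℂ := ∑' n : ℤ, q ^ (n ^ 2 + n)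

theorem summable_zpow_sq {q : ℂ} (hq0 : q ≠ 0) (hq : ‖q‖ < 1) :
    Summable fun n : ℤ => q ^ (n ^ 2) := by
  simpa using summable_zpow_mul_sq one_ne_zero hq0 hq

theorem summable_zpow_sq_add_mul {q : ℂ} (hq0 : q ≠ 0) (hq : ‖q‖ < 1) (k : ℤ) :
    Summable fun n : ℤ => q ^ (n ^ 2 + k * n) :=
  (summable_zpow_mul_sq (zpow_ne_zero k hq0) hq0 hq).congr fun n => by
    rw [zpow_add₀ hq0, ← zpow_mul, mul_comm]

theorem summable_zpow_sq_add {q : ℂ} (hq0 : q ≠ 0) (hq : ‖q‖ < 1) :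
    Summable fun n : ℤ => q ^ (n ^ 2 + n) := by
  simpa using summable_zpow_sq_add_mul hq0 hq 1

theorem pow_four_zpow (q : ℂ) (n : ℤ) : (q ^ 4) ^ n = q ^ (4 * n) := by
  rw [zpow_mul]; norm_cast

theorem rrG_dissection {q : ℂ} (hq0 : q ≠ 0) (hq : ‖q‖ < 1) :
    rrG q = qPInf (-q ^ 2) (q ^ 2) * qPInf (-q ^ 4) (q ^ 4)
      * (rrG ((q ^ 4) ^ 4) + q * rrH (-q ^ 4)) := by
  have h4 := norm_sq_lt_one hq four_ne_zero
  have h40 := pow_ne_zero 4 hq0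
  have hO := qPInf_odd_mul_neg h4
  rw [← tsum_sq_recQ_pow_four hq0 hq,
    tsum_even_add_odd (summable_mul_recQ h4 (summable_zpow_sq hq0 hq)),
    ← tsum_sq_recQ_even h40 h4, ← tsum_sq_add_recQ_odd h40 h4]
  have e1 : ∀ n : ℤ, q ^ ((2 * n) ^ 2) = (q ^ 4) ^ (n ^ 2) := fun n => by
    rw [pow_four_zpow]; congr 1; ring
  have e2 : ∀ n : ℤ, q ^ ((2 * n + 1) ^ 2) = q * (q ^ 4) ^ (n ^ 2 + n) := fun n => by
    rw [pow_four_zpow, show (2 * n + 1) ^ 2 = 1 + 4 * (n ^ 2 + n) by ring, zpow_add₀ hq0, zpow_one]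
  simp_rw [e1, e2, mul_assoc q, tsum_mul_left]
  set A := ∑' n : ℤ, (q ^ 4) ^ (n ^ 2) * recQ (q ^ 4) (2 * n)
  set B := ∑' n : ℤ, (q ^ 4) ^ (n ^ 2 + n) * recQ (q ^ 4) (2 * n + 1)
  linear_combination (-qPInf (-q ^ 2) (q ^ 2) * (A + q * B)) * hO

theorem rrH_dissection {q : ℂ} (hq0 : q ≠ 0) (hq : ‖q‖ < 1) :
    rrH q = qPInf (-q ^ 2) (q ^ 2) * qPInf (-q ^ 4) (q ^ 4)
      * (rrG (-q ^ 4) + q ^ 3 * rrH ((q ^ 4) ^ 4)) := by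
  have h4 := norm_sq_lt_one hq four_ne_zero
  have h40 := pow_ne_zero 4 hq0
  have hO := qPInf_odd_mul_neg h4
  have hH := tsum_add_one_sq_recQ_odd h40 h4
  rw [← tsum_sq_add_two_mul_recQ_pow_four hq0 hq,
    tsum_even_add_odd (summable_mul_recQ h4 (summable_zpow_sq_add_mul hq0 hq 2)),
    ← tsum_sq_add_recQ_even h40 h4]
  have e1 : ∀ n : ℤ, q ^ ((2 * n) ^ 2 + 2 * (2 * n)) = (q ^ 4) ^ (n ^ 2 + n) := fun n => by
    rw [pow_four_zpow]; congr 1; ring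
  have e2 : ∀ n : ℤ, q ^ ((2 * n + 1) ^ 2 + 2 * (2 * n + 1)) = q⁻¹ * (q ^ 4) ^ ((n + 1) ^ 2) :=
    fun n => by
      rw [pow_four_zpow, show (2 * n + 1) ^ 2 + 2 * (2 * n + 1) = -1 + 4 * (n + 1) ^ 2 by ring,
        zpow_add₀ hq0, zpow_neg_one]
  simp_rw [e1, e2, mul_assoc q⁻¹, tsum_mul_left]
  set A := ∑' n : ℤ, (q ^ 4) ^ (n ^ 2 + n) * recQ (q ^ 4) (2 * n)
  set B := ∑' n : ℤ, (q ^ 4) ^ ((n + 1) ^ 2) * recQ (q ^ 4) (2 * n + 1)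
  have hq1 : q⁻¹ * q = 1 := inv_mul_cancel₀ hq0
  linear_combination (-qPInf (-q ^ 2) (q ^ 2) * (A + q⁻¹ * B)) * hO
    + qPInf (-q ^ 2) (q ^ 2) * qPInf (-q ^ 4) (q ^ 4) * q⁻¹ * hH
    + qPInf (-q ^ 2) (q ^ 2) * qPInf (-q ^ 4) (q ^ 4) * q ^ 3 * rrH ((q ^ 4) ^ 4) * hq1

/-! ### Theta functions -/

theorem theta3_dissection {q : ℂ} (hq0 : q ≠ 0) (hq : ‖q‖ < 1) :
    theta3 q = theta3 (q ^ 4) + q * theta2 (q ^ 4) := by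
  rw [theta3, tsum_even_add_odd (summable_zpow_sq hq0 hq), theta3, theta2, ← tsum_mul_left]
  congr 1
  · refine tsum_congr fun n => ?_
    rw [pow_four_zpow]; congr 1; ring
  · refine tsum_congr fun n => ?_
    rw [pow_four_zpow, show (2 * n + 1) ^ 2 = 1 + 4 * (n ^ 2 + n) by ring, zpow_add₀ hq0, zpow_one]

theorem theta3_neg_product {q : ℂ} (hq0 : q ≠ 0) (hq : ‖q‖ < 1) :
    theta3 (-q) = qPInf q (q ^ 2) ^ 2 * qPInf (q ^ 2) (q ^ 2) := by
  have e : q ^ 2 / q = q := by field_simp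
  have h := jacobi_triple_product hq0 (pow_ne_zero 2 hq0) (norm_sq_lt_one hq two_ne_zero)
    (by rwa [e])
  rw [e] at h
  rw [sq (qPInf q _), ← h, theta3]
  refine tsum_congr fun n => ?_
  rw [sq_zpow, two_mul_tri, show n ^ 2 = n + n * (n - 1) by ring, zpow_add₀ (neg_ne_zero.mpr hq0),
    (Int.even_mul_pred_self n).neg_zpow]

theorem theta2_product {q : ℂ} (hq0 : q ≠ 0) (hq : ‖q‖ < 1) :
    theta2 q = 2 * qPInf (-q ^ 2) (q ^ 2) ^ 2 * qPInf (q ^ 2) (q ^ 2) := by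
  have h2 := norm_sq_lt_one hq two_ne_zero
  have h := jacobi_triple_product (neg_ne_zero.mpr one_ne_zero) (pow_ne_zero 2 hq0) h2
    (by rwa [div_neg, div_one, norm_neg])
  rw [div_neg, div_one, qPInf_eq_mul (-1) h2, ← tsum_shift _ 1, neg_one_mul] at h
  have e : ∀ n : ℤ, q ^ (n ^ 2 + n) = (- -1) ^ (n + 1) * (q ^ 2) ^ tri (n + 1) := fun n => by
    rw [neg_neg, one_zpow, one_mul, sq_zpow, two_mul_tri]
    congr 1
    ring
  simp_rw [theta2, e, h]
  ring

theorem theta2_eq_mul_theta3 {q : ℂ} (hq0 : q ≠ 0) (hq : ‖q‖ < 1) :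
    theta2 q = 2 * (qPInf (-q ^ 2) (q ^ 2) * qPInf (-q ^ 4) (q ^ 4)) * theta3 (-q ^ 4) := by
  have h2 := norm_sq_lt_one hq two_ne_zero
  have h4 := norm_sq_lt_one hq four_ne_zero
  have e1 := qPInf_odd_mul_neg h4
  have e2 := qPInf_odd_mul_self h4
  have e3 := qPInf_self_mul_neg h2
  rw [← pow_mul] at e3
  rw [theta2_product hq0 hq, theta3_neg_product (pow_ne_zero 4 hq0) h4]
  linear_combination 2 * qPInf (-q ^ 2) (q ^ 2) * (e3 - e2)
    - 2 * qPInf (-q ^ 2) (q ^ 2) * qPInf (q ^ 4) ((q ^ 4) ^ 2)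
      * qPInf ((q ^ 4) ^ 2) ((q ^ 4) ^ 2) * e1

/-! ### The theta function identity -/

/-- The difference whose vanishing relates two bilinear forms in theta and Rogers–Ramanujan
functions. -/
noncomputable def thetaDefect (q : ℂ) : ℂ :=
  theta3 q * rrG (-q) - theta3 (-q) * rrG q - q * theta2 q * rrH (q ^ 4)

/-- The companion of `thetaDefect` produced by the quartic dissection. -/
noncomputable def thetaDefect' (q : ℂ) : ℂ :=
  theta3 q * rrH (-q) + theta3 (-q) * rrH q - theta2 q * rrG (q ^ 4)

/-- The common factor in the quartic dissections of `rrG` and `rrH`. -/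
noncomputable def dissectionFactor (q : ℂ) : ℂ :=
  qPInf (-q ^ 2) (q ^ 2) * qPInf (-q ^ 4) (q ^ 4)

theorem thetaDefect_eq {q : ℂ} (hq0 : q ≠ 0) (hq : ‖q‖ < 1) :
    thetaDefect q = -2 * q * dissectionFactor q * thetaDefect' (q ^ 4) := by
  have hn0 := neg_ne_zero.mpr hq0
  have hn : ‖-q‖ < 1 := by rwa [norm_neg]
  have e2 : (-q) ^ 2 = q ^ 2 := by ring
  have e4 : (-q) ^ 4 = q ^ 4 := by ring
  have h1 := theta3_dissection hn0 hn
  have h2 := rrG_dissection hn0 hn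
  rw [e4] at h1
  rw [e2, e4] at h2
  rw [thetaDefect, thetaDefect', dissectionFactor, h1, h2, theta3_dissection hq0 hq,
    rrG_dissection hq0 hq, theta2_eq_mul_theta3 hq0 hq]
  ring

theorem thetaDefect'_eq {q : ℂ} (hq0 : q ≠ 0) (hq : ‖q‖ < 1) :
    thetaDefect' q = 2 * dissectionFactor q * thetaDefect (q ^ 4) := by
  have hn0 := neg_ne_zero.mpr hq0
  have hn : ‖-q‖ < 1 := by rwa [norm_neg]
  have e2 : (-q) ^ 2 = q ^ 2 := by ring
  have e4 : (-q) ^ 4 = q ^ 4 := by ring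
  have h1 := theta3_dissection hn0 hn
  have h2 := rrH_dissection hn0 hn
  rw [e4] at h1
  rw [e2, e4] at h2
  rw [thetaDefect, thetaDefect', dissectionFactor, h1, h2, theta3_dissection hq0 hq,
    rrH_dissection hq0 hq, theta2_eq_mul_theta3 hq0 hq]
  ring

theorem isBigO_tsum_zpow {e : ℤ → ℤ} (he : ∀ n, 0 ≤ e n)
    (hs : Summable fun n => (1 / 2 : ℂ) ^ e n) {w : ℂ → ℤ → ℂ} {C : ℝ}
    (hw : ∀ x, ‖x‖ ≤ 1 / 2 → ∀ n, ‖w x n‖ ≤ C) :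
    (fun x => ∑' n, x ^ e n * w x n) =O[nhdsWithin 0 {0}ᶜ] fun _ => (1 : ℝ) := by
  refine Asymptotics.IsBigO.of_bound (∑' n, C * ‖(1 / 2 : ℂ) ^ e n‖) ?_
  filter_upwards [mem_nhdsWithin_of_mem_nhds (Metric.closedBall_mem_nhds (0 : ℂ)
    (show (0 : ℝ) < 1 / 2 by norm_num))] with x hx
  rw [mem_closedBall_zero_iff] at hx
  rw [norm_one, mul_one]
  refine tsum_of_norm_bounded (hs.norm.mul_left C).hasSum fun n => ?_
  rw [norm_mul, mul_comm]
  have h0 : 0 ≤ C := (norm_nonneg _).trans (hw x hx n)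
  gcongr
  · exact hw x hx n
  · obtain ⟨m, hm⟩ := Int.eq_ofNat_of_zero_le (he n)
    rw [hm, zpow_natCast, zpow_natCast, norm_pow, norm_pow]
    gcongr
    simpa using hx

theorem isBigO_theta3 : theta3 =O[nhdsWithin 0 {0}ᶜ] fun _ => (1 : ℝ) := by
  have h := isBigO_tsum_zpow (e := fun n => n ^ 2) (fun n => sq_nonneg n)
    (summable_zpow_sq (by norm_num) (by norm_num)) (w := fun _ _ => 1) (C := 1) (by simp)
  simp only [mul_one] at h
  exact h

theorem sq_add_self_nonneg (n : ℤ) : 0 ≤ n ^ 2 + n := by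
  rcases le_or_gt 0 n with h | h <;> nlinarith

theorem isBigO_theta2 : theta2 =O[nhdsWithin 0 {0}ᶜ] fun _ => (1 : ℝ) := by
  have h := isBigO_tsum_zpow sq_add_self_nonneg
    (summable_zpow_sq_add (by norm_num) (by norm_num)) (w := fun _ _ => 1) (C := 1) (by simp)
  simp only [mul_one] at h
  exact h

theorem isBigO_rrG : rrG =O[nhdsWithin 0 {0}ᶜ] fun _ => (1 : ℝ) := by
  obtain ⟨C, -, hC⟩ := exists_recQ_bound (show (0 : ℝ) ≤ 1 / 2 by norm_num) (by norm_num)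
  exact isBigO_tsum_zpow (e := fun n => n ^ 2) (fun n => sq_nonneg n)
    (summable_zpow_sq (by norm_num) (by norm_num)) hC

theorem isBigO_rrH : rrH =O[nhdsWithin 0 {0}ᶜ] fun _ => (1 : ℝ) := by
  obtain ⟨C, -, hC⟩ := exists_recQ_bound (show (0 : ℝ) ≤ 1 / 2 by norm_num) (by norm_num)
  exact isBigO_tsum_zpow sq_add_self_nonneg
    (summable_zpow_sq_add (by norm_num) (by norm_num)) hC

theorem isBigO_qPInf_neg :
    (fun x => qPInf (-x) x) =O[nhdsWithin 0 {0}ᶜ] fun _ => (1 : ℝ) := by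
  obtain ⟨C, -, hC⟩ := exists_recQ_bound (show (0 : ℝ) ≤ 1 / 2 by norm_num) (by norm_num)
  have h := isBigO_tsum_zpow (e := fun n => tri (n + 1)) (fun n => tri_nonneg _)
    ((summable_zpow_mul_tri (z := (1 / 2 : ℂ)) (q := 1 / 2) (by norm_num) (by norm_num)
      (by norm_num)).congr fun n => by
        rw [tri_add_one, zpow_add₀ (by norm_num), mul_comm]) hC
  refine h.congr' ?_ (EventuallyEq.refl _ _)
  filter_upwards [self_mem_nhdsWithin, mem_nhdsWithin_of_mem_nhds (Metric.ball_mem_nhds (0 : ℂ)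
    one_pos)] with x hx0 hx
  rw [mem_ball_zero_iff] at hx
  have hx0 : x ≠ 0 := hx0
  rw [qPInf_eq_tsum (neg_ne_zero.mpr hx0) hx0 hx]
  refine tsum_congr fun n => ?_
  rw [neg_neg, tri_add_one, zpow_add₀ hx0]
  ring

theorem tendsto_pow_nhdsNE_zero {n : ℕ} (hn : n ≠ 0) :
    Tendsto (fun x : ℂ => x ^ n) (nhdsWithin 0 {0}ᶜ) (nhdsWithin 0 {0}ᶜ) := by
  refine tendsto_nhdsWithin_iff.mpr ⟨?_, ?_⟩
  · simpa [hn] using ((continuous_pow n).tendsto (0 : ℂ)).mono_left nhdsWithin_le_nhds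
  · filter_upwards [self_mem_nhdsWithin] with x hx
    exact pow_ne_zero n hx

theorem tendsto_neg_nhdsNE_zero :
    Tendsto (fun x : ℂ => -x) (nhdsWithin 0 {0}ᶜ) (nhdsWithin 0 {0}ᶜ) := by
  refine tendsto_nhdsWithin_iff.mpr ⟨?_, ?_⟩
  · simpa using (continuous_neg.tendsto (0 : ℂ)).mono_left nhdsWithin_le_nhds
  · filter_upwards [self_mem_nhdsWithin] with x hx
    exact neg_ne_zero.mpr hx

theorem isBigO_one_mul {f g : ℂ → ℂ} {l : Filter ℂ} (hf : f =O[l] fun _ => (1 : ℝ))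
    (hg : g =O[l] fun _ => (1 : ℝ)) : (fun x => f x * g x) =O[l] fun _ => (1 : ℝ) := by
  have h := hf.mul hg
  simp only [mul_one] at h
  exact h

theorem isBigO_dissectionFactor :
    dissectionFactor =O[nhdsWithin 0 {0}ᶜ] fun _ => (1 : ℝ) :=
  isBigO_one_mul (isBigO_qPInf_neg.comp_tendsto (tendsto_pow_nhdsNE_zero two_ne_zero))
    (isBigO_qPInf_neg.comp_tendsto (tendsto_pow_nhdsNE_zero four_ne_zero))

theorem isBigO_thetaDefect : thetaDefect =O[nhdsWithin 0 {0}ᶜ] fun _ => (1 : ℝ) := by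
  have hx : (fun x : ℂ => x) =O[nhdsWithin 0 {0}ᶜ] fun _ => (1 : ℝ) :=
    (tendsto_nhdsWithin_of_tendsto_nhds tendsto_id).isBigO_one ℝ
  exact ((isBigO_one_mul isBigO_theta3 (isBigO_rrG.comp_tendsto tendsto_neg_nhdsNE_zero)).sub
    (isBigO_one_mul (isBigO_theta3.comp_tendsto tendsto_neg_nhdsNE_zero) isBigO_rrG)).sub
    (isBigO_one_mul (isBigO_one_mul hx isBigO_theta2)
      (isBigO_rrH.comp_tendsto (tendsto_pow_nhdsNE_zero four_ne_zero)))

theorem thetaDefect_eq_zero {q : ℂ} (hq0 : q ≠ 0) (hq : ‖q‖ < 1) : thetaDefect q = 0 := by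
  set x : ℕ → ℂ := fun n => q ^ 16 ^ n with hx
  have hx0 : ∀ n, x n ≠ 0 := fun n => pow_ne_zero _ hq0
  have hx1 : ∀ n, ‖x n‖ < 1 := fun n => norm_sq_lt_one hq (by positivity)
  have hlim : Tendsto x atTop (nhdsWithin 0 {0}ᶜ) :=
    tendsto_nhdsWithin_iff.mpr ⟨(tendsto_pow_atTop_nhds_zero_of_norm_lt_one hq).comp
      (tendsto_pow_atTop_atTop_of_one_lt (by norm_num)), Eventually.of_forall hx0⟩
  obtain ⟨M, -, hM⟩ := Asymptotics.bound_of_isBigO_nat_atTop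
    (isBigO_thetaDefect.comp_tendsto hlim)
  have h := eq_zero_of_contracting (E := fun n => thetaDefect (x n))
    (a := fun n => -4 * (x n * (dissectionFactor (x n) * dissectionFactor (x n ^ 4))))
    (M := M) (fun n => by simpa using hM (x := n) (by simp)) (fun n => ?_) ?_
  · simpa [hx] using h
  · have e : x (n + 1) = (x n ^ 4) ^ 4 := by simp only [hx]; ring
    rw [e, thetaDefect_eq (hx0 n) (hx1 n),
      thetaDefect'_eq (pow_ne_zero 4 (hx0 n)) (norm_sq_lt_one (hx1 n) four_ne_zero)]
    ring
  · have h1 : (fun y => dissectionFactor y * dissectionFactor (y ^ 4))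
        =O[nhdsWithin 0 {0}ᶜ] fun _ => (1 : ℝ) := isBigO_one_mul isBigO_dissectionFactor
      (isBigO_dissectionFactor.comp_tendsto (tendsto_pow_nhdsNE_zero four_ne_zero))
    have h2 : (fun y : ℂ => y) =o[nhdsWithin 0 {0}ᶜ] fun _ => (1 : ℝ) :=
      (Asymptotics.isLittleO_one_iff ℝ).mpr nhdsWithin_le_nhds
    have h3 := h2.mul_isBigO h1
    simp only [mul_one] at h3
    simpa using (((Asymptotics.isLittleO_one_iff ℝ).mp h3).comp hlim).const_mul (-4)

/-! ### The bilateral series of `f0` -/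

/-- The partner of `f0` given by the negative half of its bilateral series. -/
noncomputable def psi0 (q : ℂ) : ℂ :=
  ∑' n : ℕ, (∏ j ∈ Finset.range n, (1 + q ^ (j + 1))) * q ^ ((n + 1) * (n + 2) / 2)

theorem natCast_triangle (n : ℕ) : (((n + 1) * (n + 2) / 2 : ℕ) : ℤ) = tri ((n : ℤ) + 2) := by
  rw [tri]
  push_cast
  congr 1
  ring

theorem zpow_tri_mul_qPInf {q : ℂ} (hq0 : q ≠ 0) (hq : ‖q‖ < 1) (j : ℕ) :
    q ^ tri ((j : ℤ) + 1) * qPInf (-q ^ (-(j : ℤ))) q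
      = 2 * (∏ i ∈ Finset.range j, (1 + q ^ (i + 1))) * qPInf (-q) q := by
  induction j with
  | zero =>
    rw [qPInf_eq_mul _ hq]
    simp [tri]
    norm_num
  | succ j ih =>
    have e : -q ^ (-((j : ℤ) + 1)) * q = -q ^ (-(j : ℤ)) := by
      rw [neg_mul, ← zpow_add_one₀ hq0]
      congr 2
      ring
    have e' : q ^ (-((j : ℤ) + 1)) = (q ^ (j + 1))⁻¹ := by rw [zpow_neg]; norm_cast
    rw [Finset.prod_range_succ, qPInf_eq_mul _ hq]
    push_cast
    rw [e, tri_add_one, zpow_add₀ hq0, e', show q ^ ((j : ℤ) + 1) = q ^ (j + 1) by norm_cast]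
    have := pow_ne_zero (j + 1) hq0
    rw [show (1 : ℂ) - -(q ^ (j + 1))⁻¹ = (1 + q ^ (j + 1)) * (q ^ (j + 1))⁻¹ by field_simp; ring]
    have h1 : q ^ (j + 1) * (q ^ (j + 1))⁻¹ = 1 := mul_inv_cancel₀ this
    linear_combination (1 + q ^ (j + 1)) * ih + q ^ tri ((j : ℤ) + 1) *
      (1 + q ^ (j + 1)) * qPInf (-q ^ (-(j : ℤ))) q * h1

/-- The exponent in the double series expansion of the bilateral series. -/
def bilateralExp (n m : ℤ) : ℤ := n ^ 2 + n * m + m + tri m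

theorem summable_bilateral {q : ℂ} (hq0 : q ≠ 0) (hq : ‖q‖ < 1) :
    Summable fun p : ℤ × ℤ => q ^ bilateralExp p.1 p.2 * recQ q p.2 := by
  obtain ⟨C, hC0, hC⟩ := exists_recQ_bound (norm_nonneg q) hq
  obtain ⟨z, hz⟩ := IsAlgClosed.exists_pow_nat_eq q (show 0 < 8 by norm_num)
  have hz0 : z ≠ 0 := by rintro rfl; exact hq0 (by simpa using hz.symm)
  have hz1 : ‖z‖ < 1 := by
    rw [← hz, norm_pow] at hq
    exact (pow_lt_one_iff_of_nonneg (norm_nonneg _) (by norm_num)).mp hq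
  refine summable_of_norm_le_mul C
    (summable_prod_mul (summable_zpow_sq hz0 hz1) (summable_zpow_sq hz0 hz1)) ?_
  rintro ⟨n, m⟩
  rcases lt_or_ge m 0 with hm | hm
  · simp only [recQ_of_neg _ hm, mul_zero, norm_zero]; positivity
  rw [norm_mul, mul_comm]
  gcongr
  · exact hC q le_rfl m
  · simp only
    rw [← zpow_add₀ hz0, ← hz, ← zpow_natCast z 8, ← zpow_mul, norm_zpow, norm_zpow]
    refine zpow_le_zpow_right_of_le_one₀ (norm_pos_iff.mpr hz0) hz1.le ?_
    have := two_mul_tri m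
    rw [bilateralExp]
    push_cast
    nlinarith [sq_nonneg (4 * m + 7 * n), sq_nonneg m, sq_nonneg (m + n), sq_nonneg n]

theorem mul_qPInf_eq_tsum {q : ℂ} (hq0 : q ≠ 0) (hq : ‖q‖ < 1) (n : ℤ) :
    q ^ (n ^ 2) * qPInf (-(q * q ^ n)) q = ∑' m : ℤ, q ^ bilateralExp n m * recQ q m := by
  rw [qPInf_eq_tsum (neg_ne_zero.mpr (mul_ne_zero hq0 (zpow_ne_zero n hq0))) hq0 hq,
    ← tsum_mul_left]
  refine tsum_congr fun m => ?_
  rw [neg_neg, bilateralExp, zpow_add₀ hq0 _ (tri m), zpow_add₀ hq0 _ m, zpow_add₀ hq0 (n ^ 2),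
    zpow_mul, mul_zpow]
  ring

theorem tsum_bilateral_even {q : ℂ} (hq0 : q ≠ 0) (r : ℤ) :
    ∑' n : ℤ, q ^ bilateralExp n (2 * r) * recQ q (2 * r)
      = theta3 q * (q ^ (r ^ 2 + r) * recQ q (2 * r)) := by
  have h : ∀ n : ℤ, q ^ bilateralExp n (2 * r) * recQ q (2 * r)
      = q ^ ((n + r) ^ 2) * (q ^ (r ^ 2 + r) * recQ q (2 * r)) := fun n => by
    have := two_mul_tri (2 * r)
    rw [← mul_assoc, ← zpow_add₀ hq0, bilateralExp]
    congr 2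
    linarith
  rw [tsum_congr h, tsum_mul_right, theta3, tsum_shift (fun n => q ^ (n ^ 2)) r]

theorem tsum_bilateral_odd {q : ℂ} (hq0 : q ≠ 0) (r : ℤ) :
    ∑' n : ℤ, q ^ bilateralExp n (2 * r + 1) * recQ q (2 * r + 1)
      = theta2 q * (q ^ ((r + 1) ^ 2) * recQ q (2 * r + 1)) := by
  have h : ∀ n : ℤ, q ^ bilateralExp n (2 * r + 1) * recQ q (2 * r + 1)
      = q ^ ((n + r) ^ 2 + (n + r)) * (q ^ ((r + 1) ^ 2) * recQ q (2 * r + 1)) := fun n => by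
    have := two_mul_tri (2 * r + 1)
    rw [← mul_assoc, ← zpow_add₀ hq0, bilateralExp]
    congr 2
    linarith
  rw [tsum_congr h, tsum_mul_right, theta2, tsum_shift (fun n => q ^ (n ^ 2 + n)) r]

theorem tsum_bilateral {q : ℂ} (hq0 : q ≠ 0) (hq : ‖q‖ < 1) :
    ∑' n : ℤ, q ^ (n ^ 2) * qPInf (-(q * q ^ n)) q
      = theta3 q * (∑' r : ℤ, q ^ (r ^ 2 + r) * recQ q (2 * r))
        + theta2 q * ∑' r : ℤ, q ^ ((r + 1) ^ 2) * recQ q (2 * r + 1) := by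
  have hs := summable_bilateral hq0 hq
  rw [tsum_congr (mul_qPInf_eq_tsum hq0 hq),
    ← Summable.tsum_comm (f := fun n m => q ^ bilateralExp n m * recQ q m) hs,
    tsum_even_add_odd (f := fun m => ∑' n : ℤ, q ^ bilateralExp n m * recQ q m)
      hs.prod_symm.prod, tsum_congr (tsum_bilateral_even hq0),
    tsum_congr (tsum_bilateral_odd hq0), tsum_mul_left, tsum_mul_left]

theorem qPInf_mul_f0_term {q : ℂ} (hq : ‖q‖ < 1) (n : ℕ) :
    q ^ ((n : ℤ) ^ 2) * qPInf (-(q * q ^ (n : ℤ))) q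
      = qPInf (-q) q * (q ^ (n ^ 2) / qP (-q) q n) := by
  have := qP_ne_zero (a := -q) hq (by rwa [norm_neg]) n
  rw [qPInf_eq_qP_mul (-q) hq n, zpow_natCast, neg_mul,
    show ((n : ℤ) ^ 2) = ((n ^ 2 : ℕ) : ℤ) by push_cast; rfl, zpow_natCast]
  generalize qPInf (-(q * q ^ n)) q = X
  field_simp

theorem qPInf_mul_psi0_term {q : ℂ} (hq0 : q ≠ 0) (hq : ‖q‖ < 1) (n : ℕ) :
    q ^ ((-((n : ℤ) + 1)) ^ 2) * qPInf (-(q * q ^ (-((n : ℤ) + 1)))) q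
      = 2 * qPInf (-q) q *
        ((∏ j ∈ Finset.range n, (1 + q ^ (j + 1))) * q ^ ((n + 1) * (n + 2) / 2)) := by
  have h := zpow_tri_mul_qPInf hq0 hq n
  have e : q * q ^ (-((n : ℤ) + 1)) = q ^ (-(n : ℤ)) := by
    rw [mul_comm, ← zpow_add_one₀ hq0]
    congr 1
    ring
  have e' : (-((n : ℤ) + 1)) ^ 2 = tri ((n : ℤ) + 2) + tri ((n : ℤ) + 1) := by
    have := two_mul_tri ((n : ℤ) + 1)
    have := two_mul_tri ((n : ℤ) + 2)
    linarith
  have e'' : q ^ ((n + 1) * (n + 2) / 2) = q ^ tri ((n : ℤ) + 2) := by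
    rw [← natCast_triangle, zpow_natCast]
  rw [e, e', zpow_add₀ hq0, mul_assoc (q ^ tri _), h, e'']
  ring

theorem tsum_nat_add_neg {f : ℤ → ℂ} (hf : Summable f) :
    ∑' n, f n = ∑' n : ℕ, f n + ∑' n : ℕ, f (-((n : ℤ) + 1)) :=
  tsum_of_nat_of_neg_add_one (hf.comp_injective Nat.cast_injective)
    (hf.comp_injective (i := fun n : ℕ => -((n : ℤ) + 1)) fun a b h => by simpa using h)

theorem qPInf_mul_f0_add_psi0 {q : ℂ} (hq0 : q ≠ 0) (hq : ‖q‖ < 1) :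
    qPInf (-q) q * (f0 q + 2 * psi0 q)
      = ∑' n : ℤ, q ^ (n ^ 2) * qPInf (-(q * q ^ n)) q := by
  have hs : Summable fun n : ℤ => q ^ (n ^ 2) * qPInf (-(q * q ^ n)) q := by
    simp_rw [mul_qPInf_eq_tsum hq0 hq]
    exact (summable_bilateral hq0 hq).prod
  rw [tsum_nat_add_neg hs, tsum_congr (qPInf_mul_f0_term hq),
    tsum_congr (qPInf_mul_psi0_term hq0 hq), tsum_mul_left, tsum_mul_left, f0, psi0]
  ring

theorem f0_add_psi0_eq {q : ℂ} (hq0 : q ≠ 0) (hq : ‖q‖ < 1) :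
    f0 q + 2 * psi0 q
      = 4 * q * (qPInf (q ^ 4) (q ^ 20) * qPInf (q ^ 16) (q ^ 20) * qPInf (q ^ 20) (q ^ 20))
          / qPInf (q ^ 2) (q ^ 4)
        + (qPInf (q ^ 2) (q ^ 5) * qPInf (q ^ 3) (q ^ 5) * qPInf (q ^ 5) (q ^ 5))
          / qPInf (-q) q := by
  have h2 := norm_sq_lt_one hq two_ne_zero
  have h4 := norm_sq_lt_one hq four_ne_zero
  have hD := thetaDefect_eq_zero hq0 hq
  have hb := qPInf_mul_f0_add_psi0 hq0 hq
  rw [tsum_bilateral hq0 hq] at hb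
  have hS := tsum_sq_add_recQ_even hq0 hq
  have hT := tsum_add_one_sq_recQ_odd hq0 hq
  have hO := qPInf_odd_mul_neg hq
  have hO2 := qPInf_odd_mul_neg h2
  have hE2 := qPInf_self_mul_neg h2
  rw [← pow_mul] at hO2 hE2
  have hH := rrH_product (pow_ne_zero 4 hq0) h4
  simp only [← pow_mul] at hH
  rw [← rrG_product hq0 hq, ← hH]
  have hP : qPInf (-q) q ≠ 0 := right_ne_zero_of_mul_eq_one hO
  have hQ : qPInf (q ^ 2) (q ^ 4) ≠ 0 := left_ne_zero_of_mul_eq_one hO2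
  have e1 : f0 q + 2 * psi0 q = theta3 q * rrG (-q) + theta2 q * (q * rrH (q ^ 4)) := by
    rw [← hS, ← hT]
    linear_combination qPInf q (q ^ 2) * hb - (f0 q + 2 * psi0 q) * hO
  have e2 : theta2 q = 2 * qPInf (q ^ 4) (q ^ 4) / qPInf (q ^ 2) (q ^ 4) := by
    rw [eq_div_iff hQ, theta2_product hq0 hq, ← hE2]
    linear_combination 2 * qPInf (q ^ 2) (q ^ 2) * qPInf (-q ^ 2) (q ^ 2) * hO2
  have e3 : theta3 (-q) = qPInf q q / qPInf (-q) q := by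
    rw [eq_div_iff hP, theta3_neg_product hq0 hq, ← qPInf_odd_mul_self hq]
    linear_combination qPInf q (q ^ 2) * qPInf (q ^ 2) (q ^ 2) * hO
  have e4 : theta3 q * rrG (-q) = theta3 (-q) * rrG q + q * theta2 q * rrH (q ^ 4) := by
    rw [thetaDefect] at hD
    linear_combination hD
  rw [e1, e4, e2, e3]
  ring

/-! ### The radial limit -/

theorem prod_range_le_geometric {g : ℕ → ℝ} {N : ℕ} (hN : 0 < N) {ρ : ℝ} (hρ0 : 0 < ρ)
    (hρ1 : ρ ≤ 1) (h0 : ∀ j, 0 ≤ g j) (h2 : ∀ j, g j ≤ 2)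
    (hb : ∀ m, ∏ s ∈ Finset.range N, g (N * m + s) ≤ ρ ^ N) (n : ℕ) :
    ∏ j ∈ Finset.range n, g j ≤ (2 / ρ) ^ N * ρ ^ n := by
  have hblock : ∀ m, ∏ j ∈ Finset.range (N * m), g j ≤ ρ ^ (N * m) := fun m => by
    induction m with
    | zero => simp
    | succ m ih =>
      rw [mul_add_one, Finset.prod_range_add, pow_add]
      exact mul_le_mul ih (hb m) (Finset.prod_nonneg fun _ _ => h0 _) (by positivity)
  have hrest : ∏ s ∈ Finset.range (n % N), g (N * (n / N) + s) ≤ 2 ^ (n % N) := by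
    simpa using Finset.prod_le_prod (s := Finset.range (n % N))
      (fun s _ => h0 (N * (n / N) + s)) fun s _ => h2 (N * (n / N) + s)
  have hρ : 1 ≤ 2 / ρ := by rw [le_div_iff₀ hρ0]; linarith
  calc ∏ j ∈ Finset.range n, g j
      = (∏ j ∈ Finset.range (N * (n / N)), g j)
          * ∏ s ∈ Finset.range (n % N), g (N * (n / N) + s) := by
        rw [← Finset.prod_range_add, Nat.div_add_mod]
    _ ≤ ρ ^ (N * (n / N)) * 2 ^ (n % N) :=
        mul_le_mul (hblock _) hrest (Finset.prod_nonneg fun _ _ => h0 _) (by positivity)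
    _ = (2 / ρ) ^ (n % N) * ρ ^ n := by
        conv_rhs => rw [← Nat.div_add_mod n N, pow_add, Nat.div_add_mod n N]
        rw [div_pow]
        field_simp
    _ ≤ (2 / ρ) ^ N * ρ ^ n := by
        gcongr
        exact (Nat.mod_lt n hN).le

theorem prod_one_add_mul_pow {N : ℕ} (hN : 0 < N) (hev : Even N) {ζ : ℂ}
    (hζ : IsPrimitiveRoot ζ N) (x : ℂ) :
    ∏ s ∈ Finset.range N, (1 + x * ζ ^ (s + 1)) = 1 - x ^ N := by
  have h := congrArg (Polynomial.eval 1)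
    (X_pow_sub_C_eq_prod hζ hN (α := -(x * ζ)) (a := x ^ N)
      (by rw [hev.neg_pow, mul_pow, hζ.pow_eq_one, mul_one]))
  simp only [Polynomial.eval_sub, Polynomial.eval_pow, Polynomial.eval_X, Polynomial.eval_C,
    one_pow, Polynomial.eval_prod] at h
  rw [h]
  exact Finset.prod_congr rfl fun s _ => by ring

theorem eventually_block_le {N : ℕ} (hN : 0 < N) (hev : Even N) {ζ : ℂ}
    (hζ : IsPrimitiveRoot ζ N) :
    ∀ᶠ t : ℝ in nhds 1, ∀ x ∈ Set.Icc (0 : ℝ) 1,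
      ∏ s ∈ Finset.range N, ‖(x * t ^ (s + 1) : ℂ) * ζ ^ (s + 1)‖
        * ‖1 + (x * t ^ (s + 1) : ℂ) * ζ ^ (s + 1)‖ ≤ 1 / 2 := by
  refine isCompact_Icc.eventually_forall_of_forall_eventually fun x hx => ?_
  have hcont : Continuous fun z : ℝ × ℝ =>
      ∏ s ∈ Finset.range N, ‖(z.2 * z.1 ^ (s + 1) : ℂ) * ζ ^ (s + 1)‖
        * ‖1 + (z.2 * z.1 ^ (s + 1) : ℂ) * ζ ^ (s + 1)‖ := by
    fun_prop
  refine (hcont.continuousAt (x := (1, x))).eventually_le_const ?_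
  have hnorm : ‖ζ‖ = 1 := hζ.norm'_eq_one hN.ne'
  simp only [Complex.ofReal_one, one_pow, mul_one, norm_mul, norm_pow, hnorm]
  rw [Finset.prod_mul_distrib, ← norm_prod (f := fun s => 1 + (x : ℂ) * ζ ^ (s + 1)), prod_one_add_mul_pow hN hev hζ]
  have h0 : 0 ≤ x ^ N := pow_nonneg hx.1 N
  have h1 : x ^ N ≤ 1 := pow_le_one₀ hx.1 hx.2
  have e : ‖(1 : ℂ) - (x : ℂ) ^ N‖ = 1 - x ^ N := by
    rw [show (1 : ℂ) - (x : ℂ) ^ N = ((1 - x ^ N : ℝ) : ℂ) by push_cast; rfl,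
      Complex.norm_of_nonneg (by linarith)]
  rw [e, Finset.prod_const, Finset.card_range, Complex.norm_of_nonneg hx.1]
  nlinarith [sq_nonneg (2 * x ^ N - 1)]

theorem pow_triangle_eq_prod (q : ℂ) (n : ℕ) :
    q ^ ((n + 1) * (n + 2) / 2) = q ^ (n + 1) * ∏ j ∈ Finset.range n, q ^ (j + 1) := by
  rw [mul_comm (q ^ (n + 1)), ← Finset.prod_range_succ (fun j => q ^ (j + 1)), Finset.prod_pow_eq_pow_sum]
  congr 1
  have h := Finset.sum_range_id (n + 2)
  rw [Finset.sum_range_succ', add_zero] at h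
  rw [h, mul_comm]
  rfl

theorem norm_psi0_term_le {q : ℂ} (hq : ‖q‖ ≤ 1) (n : ℕ) :
    ‖(∏ j ∈ Finset.range n, (1 + q ^ (j + 1))) * q ^ ((n + 1) * (n + 2) / 2)‖
      ≤ ∏ j ∈ Finset.range n, ‖q ^ (j + 1)‖ * ‖1 + q ^ (j + 1)‖ := by
  rw [pow_triangle_eq_prod, norm_mul, norm_mul, norm_prod, norm_prod, Finset.prod_mul_distrib,
    mul_comm, mul_assoc]
  refine mul_le_of_le_one_left (by positivity) ?_
  rw [norm_pow]
  exact pow_le_one₀ (norm_nonneg _) hq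

theorem tendsto_psi0 {k : ℕ} (hk : 0 < k) {ζ : ℂ} (hζ : IsPrimitiveRoot ζ (2 * k)) :
    Tendsto (fun t : ℝ => psi0 (t * ζ)) (nhdsWithin 1 (Set.Ioo 0 1))
      (nhds (∑ n ∈ Finset.range k,
        (∏ j ∈ Finset.range n, (1 + ζ ^ (j + 1))) * ζ ^ ((n + 1) * (n + 2) / 2))) := by
  have hN : 0 < 2 * k := by omega
  have hnorm : ‖ζ‖ = 1 := hζ.norm'_eq_one hN.ne'
  have hζk : ζ ^ k = -1 := by
    have h1 : (ζ ^ k - 1) * (ζ ^ k + 1) = 0 := by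
      have := hζ.pow_eq_one
      linear_combination this
    refine eq_neg_of_add_eq_zero_left ((mul_eq_zero.mp h1).resolve_left fun h => ?_)
    exact hζ.pow_ne_one_of_pos_of_lt hk.ne' (by omega) (sub_eq_zero.mp h)
  have hsum : ∑' n : ℕ, (∏ j ∈ Finset.range n, (1 + ζ ^ (j + 1))) * ζ ^ ((n + 1) * (n + 2) / 2)
      = ∑ n ∈ Finset.range k,
        (∏ j ∈ Finset.range n, (1 + ζ ^ (j + 1))) * ζ ^ ((n + 1) * (n + 2) / 2) := by
    refine tsum_eq_sum fun n hn => ?_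
    rw [Finset.mem_range, not_lt] at hn
    rw [Finset.prod_eq_zero (i := k - 1) (by rw [Finset.mem_range]; omega), zero_mul]
    rw [Nat.sub_add_cancel hk, hζk, add_neg_cancel]
  rw [← hsum]
  set ρ : ℝ := (1 / 2) ^ (((2 * k : ℕ) : ℝ)⁻¹) with hρ
  have hρN : ρ ^ (2 * k) = 1 / 2 := Real.rpow_inv_natCast_pow (by norm_num) hN.ne'
  have hρ0 : 0 < ρ := by positivity
  have hρ1 : ρ < 1 := by
    by_contra! h
    linarith [one_le_pow₀ h (n := 2 * k)]
  refine tendsto_tsum_of_dominated_convergence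
    (bound := fun n => (2 / ρ) ^ (2 * k) * ρ ^ n)
    ((summable_geometric_of_lt_one hρ0.le hρ1).mul_left _) (fun n => ?_) ?_
  · have hcont : Continuous fun t : ℝ => (∏ j ∈ Finset.range n, (1 + ((t : ℂ) * ζ) ^ (j + 1)))
        * ((t : ℂ) * ζ) ^ ((n + 1) * (n + 2) / 2) := by fun_prop
    simpa using (hcont.tendsto 1).mono_left nhdsWithin_le_nhds
  · filter_upwards [nhdsWithin_le_nhds (eventually_block_le hN (even_two_mul k) hζ),
      self_mem_nhdsWithin] with t ht hmem n
    have hq : ‖(t : ℂ) * ζ‖ ≤ 1 := by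
      rw [norm_mul, hnorm, mul_one, Complex.norm_of_nonneg hmem.1.le]
      exact hmem.2.le
    have hle : ∀ j : ℕ, ‖((t : ℂ) * ζ) ^ (j + 1)‖ ≤ 1 := fun j => by
      rw [norm_pow]
      exact pow_le_one₀ (norm_nonneg _) hq
    refine (norm_psi0_term_le hq n).trans (prod_range_le_geometric hN hρ0 hρ1.le
      (fun j => by positivity) (fun j => ?_) (fun m => ?_) n)
    · have h2 : ‖1 + ((t : ℂ) * ζ) ^ (j + 1)‖ ≤ 2 := by
        refine (norm_add_le _ _).trans ?_
        rw [norm_one]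
        linarith [hle j]
      exact (mul_le_of_le_one_left (norm_nonneg _) (hle j)).trans h2
    · rw [hρN]
      convert ht (t ^ (2 * k * m))
        ⟨pow_nonneg hmem.1.le _, pow_le_one₀ hmem.1.le hmem.2.le⟩ using 1
      refine Finset.prod_congr rfl fun s _ => ?_
      have e : ((t : ℂ) * ζ) ^ (2 * k * m + s + 1)
          = ((t ^ (2 * k * m) : ℝ) * t ^ (s + 1) : ℂ) * ζ ^ (s + 1) := by
        rw [add_assoc, pow_add, mul_pow, mul_pow, pow_mul ζ, hζ.pow_eq_one, one_pow]
        push_cast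
        ring
      rw [e]

end MockTheta

theorem stmt10 (k : ℕ) (hk : 0 < k) (ζ : ℂ) (hζ : IsPrimitiveRoot ζ (2 * k)) :
    Tendsto (fun t : ℝ =>
        f0 ((t : ℂ) * ζ) -
          (4 * ((t : ℂ) * ζ) *
              (qPInf (((t : ℂ) * ζ) ^ 4) (((t : ℂ) * ζ) ^ 20) *
                qPInf (((t : ℂ) * ζ) ^ 16) (((t : ℂ) * ζ) ^ 20) *
                qPInf (((t : ℂ) * ζ) ^ 20) (((t : ℂ) * ζ) ^ 20)) /
              qPInf (((t : ℂ) * ζ) ^ 2) (((t : ℂ) * ζ) ^ 4)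
            + (qPInf (((t : ℂ) * ζ) ^ 2) (((t : ℂ) * ζ) ^ 5) *
                qPInf (((t : ℂ) * ζ) ^ 3) (((t : ℂ) * ζ) ^ 5) *
                qPInf (((t : ℂ) * ζ) ^ 5) (((t : ℂ) * ζ) ^ 5)) /
              qPInf (-((t : ℂ) * ζ)) ((t : ℂ) * ζ)))
      (nhdsWithin 1 (Set.Ioo (0 : ℝ) 1))
      (nhds (-2 * ∑ n ∈ Finset.range k,
          (∏ j ∈ Finset.range n, (1 + ζ ^ (j + 1))) * ζ ^ ((n + 1) * (n + 2) / 2))) := by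
  have hnorm : ‖ζ‖ = 1 := hζ.norm'_eq_one (by omega)
  refine ((MockTheta.tendsto_psi0 hk hζ).const_mul (-2)).congr' ?_
  filter_upwards [self_mem_nhdsWithin] with t ht
  have hζ0 : ζ ≠ 0 := norm_ne_zero_iff.mp (by rw [hnorm]; exact one_ne_zero)
  have hq0 : (t : ℂ) * ζ ≠ 0 := mul_ne_zero (Complex.ofReal_ne_zero.mpr ht.1.ne') hζ0
  have hq : ‖(t : ℂ) * ζ‖ < 1 := by
    rw [norm_mul, hnorm, mul_one, Complex.norm_of_nonneg ht.1.le]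
    exact ht.2
  rw [← MockTheta.f0_add_psi0_eq hq0 hq]
  ring
end
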